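/- Consider G_{12q−4,12q} for q ≥ 1. (a) For all sufficiently large p ∈ (0,1) there is a unique p-optimal graph, namely the perfectly balanced subdivision G of the Wagner graph W in which every chain has length exactly q. (b) For q ≥ 8, the imbalanced W-subdivision obtained from G by moving one edge from a rail chain to an adjacent rung chain has (7q−51)q³ > 0 more spanning trees than G, and is therefore strictly more reliable than G for all sufficiently small p; consequently, there is no uniquely optimal graph in G_{12q−4,12q}. -/

import Mathlib

open Classical Finset

noncomputable section

/-- A finite multigraph: edges carry two (possibly equal) endpoints. -/
structure Multigraph where
  V : Type
  E : Type
  [fintV : Fintype V]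
  [fintE : Fintype E]
  src : E → V
  tgt : E → V

attribute [instance] Multigraph.fintV Multigraph.fintE

namespace Multigraph

variable (G : Multigraph)

/-- Number of vertices. -/
def nV : ℕ := Fintype.card G.V

/-- Number of edges (with multiplicity). -/
def nE : ℕ := Fintype.card G.E

/-- One step along an edge belonging to the edge set `S`. -/
def stepOn (S : Finset G.E) (u v : G.V) : Prop :=
  ∃ e ∈ S, (G.src e = u ∧ G.tgt e = v) ∨ (G.src e = v ∧ G.tgt e = u)

/-- The spanning subgraph with edge set `S` is connected. -/
def ConnOn (S : Finset G.E) : Prop :=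
  ∀ u v : G.V, Relation.ReflTransGen (G.stepOn S) u v

/-- `G` is connected. -/
def Connected : Prop := G.ConnOn Finset.univ

/-- The edge set `F` disconnects `G` (i.e. is a disconnection). -/
def Disconnects (F : Finset G.E) : Prop := ¬ G.ConnOn (Finset.univ \ F)

/-- `d i G`: the number of `i`-disconnections of `G`. -/
def d (i : ℕ) : ℕ :=
  ((Finset.univ : Finset (Finset G.E)).filter fun F => F.card = i ∧ G.Disconnects F).card

/-- The all-terminal reliability `R(G,p)`: each edge is independently retained with
probability `p`; this is the probability that the retained spanning subgraph is connected. -/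
def rel (p : ℝ) : ℝ :=
  ∑ S : Finset G.E, if G.ConnOn S then p ^ S.card * (1 - p) ^ (G.nE - S.card) else 0

/-- `e` is a bridge. -/
def IsBridge (e : G.E) : Prop := G.Disconnects {e}

def Bridgeless : Prop := ∀ e : G.E, ¬ G.IsBridge e

/-- The number of spanning trees of `G` (connected spanning subgraphs with `nV - 1` edges). -/
def treeCount : ℕ :=
  ((Finset.univ : Finset (Finset G.E)).filter fun S => S.card + 1 = G.nV ∧ G.ConnOn S).card

/-- The edge-connectivity: the least size of a disconnecting set of edges. -/
def edgeConnectivity : ℕ :=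
  sInf {i : ℕ | ∃ F : Finset G.E, F.card = i ∧ G.Disconnects F}

/-- Degree of a vertex (a loop counts twice). -/
def deg (v : G.V) : ℕ :=
  (Finset.univ.filter fun e => G.src e = v).card +
    (Finset.univ.filter fun e => G.tgt e = v).card

/-- The edges crossing the vertex set `A`. -/
def cutEdges (A : Finset G.V) : Finset G.E :=
  Finset.univ.filter fun e =>
    (G.src e ∈ A ∧ G.tgt e ∉ A) ∨ (G.src e ∉ A ∧ G.tgt e ∈ A)

/-- `F` is a cut: the set of edges crossing a nontrivial bipartition of the vertices. -/
def IsCut (F : Finset G.E) : Prop :=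
  ∃ A : Finset G.V, A.Nonempty ∧ A ≠ Finset.univ ∧ F = G.cutEdges A

/-- `F` is a bond: a minimal cut. -/
def IsBond (F : Finset G.E) : Prop :=
  G.IsCut F ∧ ∀ F' ⊆ F, G.IsCut F' → F' = F

/-- Number of `s`-bonds of `G`. -/
def bondCount (s : ℕ) : ℕ :=
  ((Finset.univ : Finset (Finset G.E)).filter fun F => F.card = s ∧ G.IsBond F).card

/-- Adjacency of vertices. -/
def Adj (u v : G.V) : Prop :=
  ∃ e : G.E, (G.src e = u ∧ G.tgt e = v) ∨ (G.src e = v ∧ G.tgt e = u)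

/-- `G` is simple: no loops and no parallel edges. -/
def IsSimple : Prop :=
  (∀ e : G.E, G.src e ≠ G.tgt e) ∧
    ∀ e f : G.E,
      ((G.src e = G.src f ∧ G.tgt e = G.tgt f) ∨ (G.src e = G.tgt f ∧ G.tgt e = G.src f)) →
        e = f

end Multigraph

/-- `G ∈ 𝒢_{n,m}`: connected with `n` vertices and `m` edges. -/
def memG (G : Multigraph) (n m : ℕ) : Prop :=
  G.nV = n ∧ G.nE = m ∧ G.Connected

/-- Isomorphism of multigraphs. -/
structure MGIso (G H : Multigraph) where
  vMap : G.V ≃ H.V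
  eMap : G.E ≃ H.E
  ends_eq : ∀ e : G.E,
    (H.src (eMap e) = vMap (G.src e) ∧ H.tgt (eMap e) = vMap (G.tgt e)) ∨
    (H.src (eMap e) = vMap (G.tgt e) ∧ H.tgt (eMap e) = vMap (G.src e))

def IsIso (G H : Multigraph) : Prop := Nonempty (MGIso G H)

/-- `G` is `p`-optimal in `𝒢_{n,m}`. -/
def pOptimal (G : Multigraph) (n m : ℕ) (p : ℝ) : Prop :=
  memG G n m ∧ ∀ H : Multigraph, memG H n m → H.rel p ≤ G.rel p

/-- `G` is uniquely optimal in `𝒢_{n,m}`: strictly more reliable than every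
non-isomorphic member, for every `p ∈ (0,1)`. -/
def UniquelyOptimal (G : Multigraph) (n m : ℕ) : Prop :=
  memG G n m ∧ ∀ H : Multigraph, memG H n m → ¬ IsIso G H →
    ∀ p : ℝ, 0 < p → p < 1 → H.rel p < G.rel p

noncomputable instance quotFintype {α : Type} [Fintype α] {r : α → α → Prop} :
    Fintype (Quot r) :=
  letI := Classical.decEq (Quot r)
  Fintype.ofSurjective (Quot.mk r) fun q => Quot.exists_rep q

/-- Identification of the endpoints of zero-weight edges. -/
def zeroRel (D : Multigraph) (w : D.E → ℕ) : D.V → D.V → Prop :=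
  fun u v => ∃ e : D.E, w e = 0 ∧ D.src e = u ∧ D.tgt e = v

/-- The `j`-th node along the chain replacing the edge `e` (whose chain has `w e` edges). -/
def chainNode (D : Multigraph) (w : D.E → ℕ) (e : D.E) (j : ℕ) :
    Quot (zeroRel D w) ⊕ (Σ f : D.E, Fin (w f - 1)) :=
  if h : 0 < j ∧ j < w e then Sum.inr ⟨e, ⟨j - 1, by omega⟩⟩
  else if j = 0 then Sum.inl (Quot.mk _ (D.src e))
  else Sum.inl (Quot.mk _ (D.tgt e))

/-- The weak subdivision of `D` determined by the chain lengths `w`: each edge `e` is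
replaced by a chain with `w e` edges; zero-weight edges are contracted. -/
def subdivide (D : Multigraph) (w : D.E → ℕ) : Multigraph where
  V := Quot (zeroRel D w) ⊕ (Σ f : D.E, Fin (w f - 1))
  E := Σ f : D.E, Fin (w f)
  src f := chainNode D w f.1 f.2.val
  tgt f := chainNode D w f.1 (f.2.val + 1)

/-- The zero-weight edges contain no cycle (no "zero cycle"): they form a forest. -/
def ZeroAcyclic (D : Multigraph) (w : D.E → ℕ) : Prop :=
  Fintype.card (Quot (zeroRel D w)) +
      (Finset.univ.filter fun e : D.E => w e = 0).card = Fintype.card D.V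

/-- `G` is a weak subdivision of `D` with chain lengths `w`. -/
def IsWeakSubdivision (G D : Multigraph) (w : D.E → ℕ) : Prop :=
  ZeroAcyclic D w ∧ IsIso G (subdivide D w)

/-- `D` is a weak distillation of `G`. -/
def IsWeakDistillation (D G : Multigraph) : Prop :=
  ∃ w : D.E → ℕ, IsWeakSubdivision G D w

/-- The chain lengths differ pairwise by at most one. -/
def BalancedWeights {E : Type} (w : E → ℕ) : Prop := ∀ e f : E, w e ≤ w f + 1

/-- `D ∈ 𝒟_k`: connected, cubic, 3-edge-connected, of exceedance `k`. -/
def memDk (k : ℕ) (D : Multigraph) : Prop :=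
  D.Connected ∧ (∀ v : D.V, D.deg v = 3) ∧
    (∀ F : Finset D.E, D.Disconnects F → 3 ≤ F.card) ∧ D.nE = D.nV + k

/-- Identification of the two endpoints of the edge `e`. -/
def contractRel (G : Multigraph) (e : G.E) : G.V → G.V → Prop :=
  fun u v => u = G.src e ∧ v = G.tgt e

/-- Contraction of the edge `e`. -/
def Multigraph.contract (G : Multigraph) (e : G.E) : Multigraph :=
  letI := Classical.decEq G.E
  { V := Quot (contractRel G e)
    E := {f : G.E // f ≠ e}
    src := fun f => Quot.mk _ (G.src f.1)
    tgt := fun f => Quot.mk _ (G.tgt f.1) }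

/-- `G'` is obtained from `G` by shifting an edge: in an intermediate graph `H`
(the expansion of `G` at a vertex by the new edge `e'`), the edges `e, e'` form a
2-bond; contracting `e'` gives back `G`, while contracting `e` gives `G'`. -/
def IsShiftOf (G G' : Multigraph) : Prop :=
  ∃ (H : Multigraph) (e e' : H.E), e ≠ e' ∧
    H.src e ≠ H.tgt e ∧ H.src e' ≠ H.tgt e' ∧
    H.IsBond {e, e'} ∧
    IsIso (H.contract e') G ∧ IsIso (H.contract e) G'

/-- Equivalence of graphs: repeated edge shifting. -/
def EquivalentGraphs (G G' : Multigraph) : Prop :=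
  Relation.ReflTransGen IsShiftOf G G'

/-- `G'` is obtained from `G` by moving the (non-loop) edge `e`: contracting `e` and
expanding a new edge, identified with `e` via `φ`, at an arbitrary vertex.
Equivalently, `G/e` and `G'/φ e` agree, compatibly with the edge identification `φ`. -/
def MovedEdge (G G' : Multigraph) (φ : G.E ≃ G'.E) (e : G.E) : Prop :=
  G.src e ≠ G.tgt e ∧ G'.src (φ e) ≠ G'.tgt (φ e) ∧
  ∃ ψ : Quot (contractRel G e) ≃ Quot (contractRel G' (φ e)),
    ∀ f : G.E, f ≠ e →
      ((ψ (Quot.mk _ (G.src f)) = Quot.mk _ (G'.src (φ f)) ∧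
        ψ (Quot.mk _ (G.tgt f)) = Quot.mk _ (G'.tgt (φ f))) ∨
       (ψ (Quot.mk _ (G.src f)) = Quot.mk _ (G'.tgt (φ f)) ∧
        ψ (Quot.mk _ (G.tgt f)) = Quot.mk _ (G'.src (φ f))))

/-- Move one edge from the chain `a` to the chain `b`. -/
def moveWeight {E : Type} (w : E → ℕ) (a b : E) : E → ℕ :=
  fun g => if g = b then w b + 1 else if g = a then w a - 1 else w g

/-- The chains of maximal length. -/
def maxChains (D : Multigraph) (w : D.E → ℕ) : Finset D.E :=
  Finset.univ.filter fun e => ∀ f : D.E, w f ≤ w e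

/-- The chains of minimal length. -/
def minChains (D : Multigraph) (w : D.E → ℕ) : Finset D.E :=
  Finset.univ.filter fun e => ∀ f : D.E, w e ≤ w f

/-- Degree of `v` within the edge set `S`. -/
def degIn (D : Multigraph) (S : Finset D.E) (v : D.V) : ℕ :=
  (S.filter fun e => D.src e = v).card + (S.filter fun e => D.tgt e = v).card

/-- `S` is a matching (pairwise non-adjacent edges). -/
def IsMatchingIn (D : Multigraph) (S : Finset D.E) : Prop := ∀ v : D.V, degIn D S v ≤ 1

/-- `S` is a path with three edges. -/
def IsPath3In (D : Multigraph) (S : Finset D.E) : Prop :=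
  S.card = 3 ∧ (∀ v : D.V, degIn D S v ≤ 2) ∧
    (Finset.univ.filter fun v : D.V => degIn D S v = 1).card = 2

/-- `S` is the disjoint union of a path with three edges and a single edge. -/
def IsPath3PlusEdgeIn (D : Multigraph) (S : Finset D.E) : Prop :=
  S.card = 4 ∧ (∀ v : D.V, degIn D S v ≤ 2) ∧
    (Finset.univ.filter fun v : D.V => degIn D S v = 1).card = 4 ∧
    ∃ e ∈ S, degIn D S (D.src e) = 2 ∧ degIn D S (D.tgt e) = 2

/-- `S` is the disjoint union of two paths with two edges each. -/
def IsTwoPlusTwoIn (D : Multigraph) (S : Finset D.E) : Prop :=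
  S.card = 4 ∧ (∀ v : D.V, degIn D S v ≤ 2) ∧
    (Finset.univ.filter fun v : D.V => degIn D S v = 1).card = 4 ∧
    ∀ e ∈ S, degIn D S (D.src e) = 1 ∨ degIn D S (D.tgt e) = 1

/-- Two edges sharing a vertex. -/
def AdjEdges (D : Multigraph) (a b : D.E) : Prop :=
  ∃ v : D.V, (D.src a = v ∨ D.tgt a = v) ∧ (D.src b = v ∨ D.tgt b = v)

/-- The number of incidences of edges of weight `c` at the vertex `u`. -/
def incCount (D : Multigraph) (w : D.E → ℕ) (u : D.V) (c : ℕ) : ℕ :=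
  (Finset.univ.filter fun e : D.E => D.src e = u ∧ w e = c).card +
    (Finset.univ.filter fun e : D.E => D.tgt e = u ∧ w e = c).card

/-- The `π^v`-value of the vertex `u`: the number of incident edges of weight `q + 1`
minus the number of incident edges of weight `q - 1`. -/
def piV (D : Multigraph) (w : D.E → ℕ) (q : ℕ) (u : D.V) : ℤ :=
  (incCount D w u (q + 1) : ℤ) -
    (if q = 0 then 0 else (incCount D w u (q - 1) : ℤ))

/-- The `π^v`-values are balanced: pairwise differences at most one. -/
def BalancedPiV (D : Multigraph) (w : D.E → ℕ) (q : ℕ) : Prop :=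
  ∀ u v : D.V, piV D w q u ≤ piV D w q v + 1

/-- The standard weight `q`, where `m = 3kq + r` with `-3k/2 < r ≤ 3k/2`. -/
def stdWeight (m k : ℕ) : ℕ := (2 * m + 3 * k - 1) / (6 * k)

/-- `w` is a balanced weighting of `D` of total size `m` (the implied weak
subdivision is the generic member of `ℬ_m(D)`). -/
def IsBalancedWeighting (D : Multigraph) (w : D.E → ℕ) (m : ℕ) : Prop :=
  (∑ e : D.E, w e) = m ∧ BalancedWeights w ∧ ZeroAcyclic D w

/-- Every 3-bond of `D` is trivial (consists of the three edges at a single vertex). -/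
def OnlyTrivialThreeBonds (D : Multigraph) : Prop :=
  ∀ F : Finset D.E, D.IsBond F → F.card = 3 →
    ∃ u : D.V, F = Finset.univ.filter fun e => D.src e = u ∨ D.tgt e = u

/-- The 3-dipole: two vertices joined by three parallel edges. -/
def dipole3 : Multigraph where
  V := Fin 2
  E := Fin 3
  src _ := 0
  tgt _ := 1

/-- The complete graph `K₄`. -/
def K4 : Multigraph where
  V := Fin 4
  E := {p : Fin 4 × Fin 4 // p.1 < p.2}
  src p := p.1.1
  tgt p := p.1.2

/-- The complete bipartite graph `K_{3,3}`. -/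
def K33 : Multigraph where
  V := Fin 3 ⊕ Fin 3
  E := Fin 3 × Fin 3
  src p := Sum.inl p.1
  tgt p := Sum.inr p.2

/-- The triangular prism `Π₃`; the edges `Sum.inr i` are the rungs. -/
def prism : Multigraph where
  V := Fin 3 × Bool
  E := (Fin 3 × Bool) ⊕ Fin 3
  src := fun e => match e with
    | Sum.inl (i, b) => (i, b)
    | Sum.inr i => (i, false)
  tgt := fun e => match e with
    | Sum.inl (i, b) => (i + 1, b)
    | Sum.inr i => (i, true)

/-- The Wagner graph (the 4-Möbius ladder): the edges `Sum.inl i` are the rails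
(the 8-cycle) and the edges `Sum.inr j` are the rungs. -/
def wagner : Multigraph where
  V := Fin 8
  E := Fin 8 ⊕ Fin 4
  src := fun e => match e with
    | Sum.inl i => i
    | Sum.inr j => ⟨j.val, by omega⟩
  tgt := fun e => match e with
    | Sum.inl i => i + 1
    | Sum.inr j => ⟨j.val + 4, by omega⟩

/-- The Petersen graph. -/
def petersen : Multigraph where
  V := Fin 5 × Bool
  E := Fin 5 ⊕ Fin 5 ⊕ Fin 5
  src := fun e => match e with
    | Sum.inl i => (i, false)
    | Sum.inr (Sum.inl i) => (i, false)
    | Sum.inr (Sum.inr i) => (i, true)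
  tgt := fun e => match e with
    | Sum.inl i => (i + 1, false)
    | Sum.inr (Sum.inl i) => (i, true)
    | Sum.inr (Sum.inr i) => (i + 2, true)

/-- Removing `F` leaves the graph connected (colouring formulation). -/
def ND (G : Multigraph) (F : Finset G.E) : Prop :=
  ∀ P : G.V → Prop, (∀ e, e ∉ F → (P (G.src e) ↔ P (G.tgt e))) → ∀ u v, P u → P v

theorem connOn_iff (G : Multigraph) (S : Finset G.E) :
    G.ConnOn S ↔ ND G Sᶜ := by
  constructor
  · intro h P hP u v hu
    have := h u v
    induction this with
    | refl => exact hu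
    | tail _ hs ih =>
      obtain ⟨e, he, h1 | h1⟩ := hs
      · rw [← h1.2, ← hP e (by simpa using he), h1.1]; exact ih
      · rw [← h1.1, hP e (by simpa using he), h1.2]; exact ih
  · intro h u v
    refine h (fun x => Relation.ReflTransGen (G.stepOn S) u x) ?_ u v .refl
    intro e he
    have he : e ∈ S := by simpa using he
    constructor
    · intro h; exact h.tail ⟨e, he, Or.inl ⟨rfl, rfl⟩⟩
    · intro h; exact h.tail ⟨e, he, Or.inr ⟨rfl, rfl⟩⟩

theorem ND.mono {G : Multigraph} {F F' : Finset G.E} (h : ND G F') (hF : F ⊆ F') : ND G F :=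
  fun P hP => h P fun e he => hP e fun h' => he (hF h')

theorem connected_iff (G : Multigraph) : G.Connected ↔ ND G ∅ := by
  unfold Multigraph.Connected
  rw [connOn_iff]; simp

/-- Number of non-disconnecting `i`-sets. -/
def cN (G : Multigraph) (i : ℕ) : ℕ :=
  ((univ : Finset (Finset G.E)).filter fun F => F.card = i ∧ ND G F).card

theorem cN_le (G : Multigraph) (i : ℕ) : cN G i ≤ G.nE.choose i := by
  unfold cN Multigraph.nE
  rw [← Finset.card_univ, ← Finset.card_powersetCard]
  apply Finset.card_le_card
  intro F hF
  simp only [mem_filter, mem_univ, true_and] at hF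
  simp [mem_powersetCard, hF.1]

theorem rel_eq (G : Multigraph) (p : ℝ) :
    G.rel p = ∑ i ∈ range (G.nE + 1), (cN G i : ℝ) * (p ^ (G.nE - i) * (1 - p) ^ i) := by
  have h1 : G.rel p = ∑ F : Finset G.E,
      if ND G F then p ^ (G.nE - F.card) * (1 - p) ^ F.card else 0 := by
    unfold Multigraph.rel
    refine Fintype.sum_equiv (Equiv.ofBijective (fun S : Finset G.E => Sᶜ)
      compl_bijective) _ _ ?_
    intro S
    have hS : S.card ≤ G.nE := Finset.card_le_univ S
    simp only [Equiv.ofBijective_apply, connOn_iff, Finset.card_compl]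
    have : G.nE - (Fintype.card G.E - S.card) = S.card := by
      unfold Multigraph.nE at *; omega
    rw [this]; rfl
  rw [h1]
  have h2 : ∀ F : Finset G.E, (if ND G F then p ^ (G.nE - F.card) * (1 - p) ^ F.card else 0)
      = ∑ i ∈ range (G.nE + 1),
        if (F.card = i ∧ ND G F) then p ^ (G.nE - i) * (1 - p) ^ i else 0 := by
    intro F
    have hS : F.card ≤ G.nE := Finset.card_le_univ F
    rw [Finset.sum_eq_single F.card]
    · simp
    · intro b _ hb
      rw [if_neg]
      rintro ⟨h, _⟩
      exact hb h.symm
    · intro h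
      simp at h; omega
  rw [Finset.sum_congr rfl fun F _ => h2 F, Finset.sum_comm]
  apply Finset.sum_congr rfl
  intro i _
  rw [← Finset.sum_filter, Finset.sum_const, nsmul_eq_mul]
  rfl

theorem nd_iso {G H : Multigraph} (f : MGIso G H) (F : Finset G.E) :
    ND G F ↔ ND H (F.map f.eMap.toEmbedding) := by
  constructor
  · intro h P hP u v hu
    have := h (fun x => P (f.vMap x)) (fun e he => by
      have := hP (f.eMap e) (by simpa using he)
      rcases f.ends_eq e with h1 | h1
      · rw [h1.1, h1.2] at this; exact this
      · rw [h1.1, h1.2] at this; exact this.symm) (f.vMap.symm u) (f.vMap.symm v) (by simpa using hu)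
    simpa using this
  · intro h P hP u v hu
    have := h (fun x => P (f.vMap.symm x)) (fun e he => by
      have h2 : f.eMap.symm e ∉ F := by
        intro h3; apply he; simp [Finset.mem_map_equiv, h3]
      have := hP _ h2
      have h3 := f.ends_eq (f.eMap.symm e)
      simp only [Equiv.apply_symm_apply] at h3
      rcases h3 with h1 | h1
      · rw [h1.1, h1.2]; simpa using this
      · rw [h1.1, h1.2]; simpa using this.symm) (f.vMap u) (f.vMap v) (by simpa using hu)
    simpa using this

theorem cN_iso {G H : Multigraph} (h : IsIso G H) (i : ℕ) : cN G i = cN H i := by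
  obtain ⟨f⟩ := h
  unfold cN
  refine Finset.card_bij (fun F _ => F.map f.eMap.toEmbedding) ?_ ?_ ?_
  · intro F hF
    simp only [mem_filter, mem_univ, true_and, Finset.card_map] at hF ⊢
    exact ⟨hF.1, (nd_iso f F).1 hF.2⟩
  · intro F _ F' _ h
    exact Finset.map_injective _ h
  · intro F hF
    simp only [mem_filter, mem_univ, true_and] at hF
    have e1 : (F.map f.eMap.symm.toEmbedding).map f.eMap.toEmbedding = F := by
      ext x; simp [Finset.mem_map_equiv]
    refine ⟨F.map f.eMap.symm.toEmbedding, ?_, e1⟩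
    simp only [mem_filter, mem_univ, true_and, Finset.card_map]
    refine ⟨hF.1, ?_⟩
    rw [nd_iso f, e1]; exact hF.2

theorem nE_iso {G H : Multigraph} (h : IsIso G H) : G.nE = H.nE := by
  obtain ⟨f⟩ := h
  exact Fintype.card_congr f.eMap

theorem nV_iso {G H : Multigraph} (h : IsIso G H) : G.nV = H.nV := by
  obtain ⟨f⟩ := h
  exact Fintype.card_congr f.vMap

theorem rel_iso {G H : Multigraph} (h : IsIso G H) (p : ℝ) : G.rel p = H.rel p := by
  rw [rel_eq, rel_eq, nE_iso h]
  exact Finset.sum_congr rfl fun i _ => by rw [cN_iso h]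

theorem isIso_symm {G H : Multigraph} (h : IsIso G H) : IsIso H G := by
  obtain ⟨f⟩ := h
  refine ⟨⟨f.vMap.symm, f.eMap.symm, ?_⟩⟩
  intro e
  have h3 := f.ends_eq (f.eMap.symm e)
  simp only [Equiv.apply_symm_apply] at h3
  rcases h3 with h1 | h1
  · left; simp [h1.1, h1.2]
  · right; simp [h1.1, h1.2]

theorem cN_zero (G : Multigraph) : cN G 0 = if ND G ∅ then 1 else 0 := by
  unfold cN
  split_ifs with h
  · rw [Finset.card_eq_one]
    refine ⟨∅, ?_⟩
    ext F
    simp only [mem_filter, mem_univ, true_and, Finset.card_eq_zero, mem_singleton]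
    constructor
    · exact fun h => h.1
    · rintro rfl; exact ⟨rfl, h⟩
  · rw [Finset.card_eq_zero]
    ext F
    simp only [mem_filter, mem_univ, true_and, Finset.card_eq_zero, Finset.notMem_empty, iff_false]
    rintro ⟨rfl, h'⟩; exact h h'

theorem connected_iff_cN (G : Multigraph) : G.Connected ↔ cN G 0 = 1 := by
  rw [connected_iff, cN_zero]; split_ifs with h <;> simp [h]

/-- full count means that every set of that size is fine -/
theorem nd_of_cN {G : Multigraph} {i : ℕ} (h : G.nE.choose i ≤ cN G i) (F : Finset G.E)
    (hF : F.card = i) : ND G F := by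
  have h1 : ((univ : Finset (Finset G.E)).filter fun F => F.card = i ∧ ND G F)
      = powersetCard i univ := by
    apply Finset.eq_of_subset_of_card_le
    · intro F hF
      simp only [mem_filter, mem_univ, true_and] at hF
      simp [mem_powersetCard, hF.1]
    · rw [Finset.card_powersetCard, Finset.card_univ]; exact h
  have h2 : F ∈ powersetCard i (univ : Finset G.E) := by simp [mem_powersetCard, hF]
  rw [← h1] at h2
  simp only [mem_filter] at h2
  exact h2.2.2

theorem treeCount_eq {G : Multigraph} {k : ℕ} (h : G.nE + 1 = G.nV + k) (hV : 1 ≤ G.nV):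
    G.treeCount = cN G k := by
  unfold Multigraph.treeCount cN
  refine Finset.card_bij (fun F _ => Fᶜ) ?_ ?_ ?_
  · intro F hF
    simp only [mem_filter, mem_univ, true_and, Finset.card_compl] at hF ⊢
    have hS : F.card ≤ G.nE := Finset.card_le_univ F
    refine ⟨?_, (connOn_iff _ _).1 hF.2⟩
    change G.nE - F.card = k
    omega
  · intro F _ F' _ h
    exact compl_injective h
  · intro F hF
    simp only [mem_filter, mem_univ, true_and] at hF
    refine ⟨Fᶜ, ?_, compl_compl F⟩
    simp only [mem_filter, mem_univ, true_and, Finset.card_compl]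
    have hS : F.card ≤ G.nE := Finset.card_le_univ F
    refine ⟨?_, (connOn_iff _ _).2 (by rw [compl_compl]; exact hF.2)⟩
    change G.nE - F.card + 1 = _
    omega

/-- lexicographic comparison near `p = 1` -/
theorem lex_one (m : ℕ) : ∃ p₀ : ℝ, 0 < p₀ ∧ p₀ < 1 ∧ ∀ p : ℝ, p₀ < p → p < 1 →
    ∀ G H : Multigraph, G.nE = m → H.nE = m → ∀ i, (∀ j < i, cN H j ≤ cN G j) →
      cN H i < cN G i → H.rel p < G.rel p := by
  have hc : ContinuousAt (fun p : ℝ => p ^ m - (1 - p) * 2 ^ m) 1 := by fun_prop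
  have h1 : ∀ᶠ p in nhds (1 : ℝ), 0 < p ^ m - (1 - p) * 2 ^ m :=
    hc.eventually (lt_mem_nhds (by norm_num))
  obtain ⟨ε, hε, h2⟩ := Metric.eventually_nhds_iff.1 h1
  refine ⟨max (1 / 2) (1 - ε), by positivity, by simp [hε]; norm_num, ?_⟩
  intro p hp hp1 G H hG hH i hj hi
  have hpa : 1 / 2 < p := lt_of_le_of_lt (le_max_left _ _) hp
  have hpb : 1 - ε < p := lt_of_le_of_lt (le_max_right _ _) hp
  have hp0 : 0 < p := by linarith
  have key := h2 (y := p) (by rw [Real.dist_eq, abs_lt]; constructor <;> linarith)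
  have him : i ≤ m := by
    by_contra h
    have := cN_le G i
    rw [hG, Nat.choose_eq_zero_of_lt (by omega)] at this
    omega
  rw [rel_eq, rel_eq, hG, hH, ← sub_pos, ← Finset.sum_sub_distrib]
  set x := 1 - p with hx
  have hx0 : 0 < x := by linarith
  have hx1 : x ≤ 1 := by linarith
  -- termwise lower bound
  have hb : ∀ j ∈ range (m + 1), (if j = i then x ^ i * p ^ m else 0) - (m.choose j : ℝ) * x ^ (i + 1)
      ≤ (cN G j : ℝ) * (p ^ (m - j) * x ^ j) - (cN H j : ℝ) * (p ^ (m - j) * x ^ j) := by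
    intro j hjm
    have hjm : j ≤ m := by simpa [Nat.lt_succ_iff] using hjm
    have ht : 0 ≤ p ^ (m - j) * x ^ j := by positivity
    have hcx : 0 ≤ (m.choose j : ℝ) * x ^ (i + 1) := by positivity
    rw [← sub_mul]
    rcases lt_trichotomy j i with h | h | h
    · rw [if_neg h.ne]
      have : (cN H j : ℝ) ≤ cN G j := by exact_mod_cast hj j h
      have := mul_nonneg (sub_nonneg.2 this) ht
      linarith
    · subst h
      rw [if_pos rfl]
      have h3 : (cN H j : ℝ) + 1 ≤ cN G j := by exact_mod_cast hi
      have h4 : p ^ m ≤ p ^ (m - j) := pow_le_pow_of_le_one hp0.le hp1.le (by omega)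
      have h5 : x ^ j * p ^ m ≤ p ^ (m - j) * x ^ j := by
        rw [mul_comm]; gcongr
      nlinarith
    · rw [if_neg h.ne']
      have h3 : (cN H j : ℝ) ≤ m.choose j := by
        have := cN_le H j; rw [hH] at this; exact_mod_cast this
      have h4 : x ^ j ≤ x ^ (i + 1) := pow_le_pow_of_le_one hx0.le hx1 h
      have h5 : p ^ (m - j) ≤ 1 := pow_le_one₀ hp0.le hp1.le
      have h6 : p ^ (m - j) * x ^ j ≤ x ^ (i + 1) := by
        calc p ^ (m - j) * x ^ j ≤ 1 * x ^ (i + 1) := by gcongr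
          _ = _ := one_mul _
      have h7 : (0 : ℝ) ≤ cN G j := by positivity
      have h8 : (cN H j : ℝ) * (p ^ (m - j) * x ^ j) ≤ (m.choose j : ℝ) * x ^ (i + 1) := by
        gcongr
      nlinarith [mul_nonneg h7 ht]
  refine lt_of_lt_of_le ?_ (Finset.sum_le_sum hb)
  rw [Finset.sum_sub_distrib, ← Finset.sum_mul, Finset.sum_ite_eq' (range (m + 1)) i]
  rw [if_pos (by simp; omega)]
  have h9 : ∑ j ∈ range (m + 1), (m.choose j : ℝ) = 2 ^ m := by
    exact_mod_cast Nat.sum_range_choose m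
  rw [h9]
  have : x ^ i * p ^ m - 2 ^ m * x ^ (i + 1) = x ^ i * (p ^ m - x * 2 ^ m) := by ring
  rw [this]
  have := pow_pos hx0 i
  positivity

/-- comparison near `p = 0` -/
theorem lex_zero (m k : ℕ) (hkm : k ≤ m) : ∃ p₁ : ℝ, 0 < p₁ ∧ p₁ < 1 ∧ ∀ p : ℝ, 0 < p → p < p₁ →
    ∀ G H : Multigraph, G.nE = m → H.nE = m → (∀ j, k < j → cN H j = 0) →
      cN H k < cN G k → H.rel p < G.rel p := by
  have hc : ContinuousAt (fun p : ℝ => (1 - p) ^ k - p * 2 ^ m) 0 := by fun_prop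
  have h1 : ∀ᶠ p in nhds (0 : ℝ), 0 < (1 - p) ^ k - p * 2 ^ m :=
    hc.eventually (lt_mem_nhds (by norm_num))
  obtain ⟨ε, hε, h2⟩ := Metric.eventually_nhds_iff.1 h1
  refine ⟨min (1 / 2) ε, by positivity, lt_of_le_of_lt (min_le_left _ _) (by norm_num), ?_⟩
  intro p hp0 hp G H hG hH hj hi
  have hpa : p < 1 / 2 := lt_of_lt_of_le hp (min_le_left _ _)
  have hpb : p < ε := lt_of_lt_of_le hp (min_le_right _ _)
  have hp1 : p ≤ 1 := by linarith
  have key := h2 (y := p) (by rw [Real.dist_eq, abs_lt]; constructor <;> linarith)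
  rw [rel_eq, rel_eq, hG, hH, ← sub_pos, ← Finset.sum_sub_distrib]
  set x := 1 - p with hx
  have hx0 : 0 < x := by linarith
  have hx1 : x ≤ 1 := by linarith
  have hb : ∀ j ∈ range (m + 1), (if j = k then x ^ k * p ^ (m - k) else 0)
        - (m.choose j : ℝ) * p ^ (m - k + 1)
      ≤ (cN G j : ℝ) * (p ^ (m - j) * x ^ j) - (cN H j : ℝ) * (p ^ (m - j) * x ^ j) := by
    intro j hjm
    have hjm : j ≤ m := by simpa [Nat.lt_succ_iff] using hjm
    have ht : 0 ≤ p ^ (m - j) * x ^ j := by positivity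
    have hcx : 0 ≤ (m.choose j : ℝ) * p ^ (m - k + 1) := by positivity
    rw [← sub_mul]
    rcases lt_trichotomy j k with h | h | h
    · rw [if_neg h.ne]
      have h3 : (cN H j : ℝ) ≤ m.choose j := by
        have := cN_le H j; rw [hH] at this; exact_mod_cast this
      have h4 : x ^ j ≤ 1 := pow_le_one₀ hx0.le hx1
      have h5 : p ^ (m - j) ≤ p ^ (m - k + 1) := pow_le_pow_of_le_one hp0.le hp1 (by omega)
      have h6 : p ^ (m - j) * x ^ j ≤ p ^ (m - k + 1) := by
        calc p ^ (m - j) * x ^ j ≤ p ^ (m - k + 1) * 1 := by gcongr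
          _ = _ := mul_one _
      have h7 : (0 : ℝ) ≤ cN G j := by positivity
      have h8 : (cN H j : ℝ) * (p ^ (m - j) * x ^ j) ≤ (m.choose j : ℝ) * p ^ (m - k + 1) := by
        gcongr
      nlinarith [mul_nonneg h7 ht]
    · subst h
      rw [if_pos rfl]
      have h3 : (cN H j : ℝ) + 1 ≤ cN G j := by exact_mod_cast hi
      nlinarith
    · rw [if_neg h.ne', hj j h]
      have h7 : (0 : ℝ) ≤ cN G j := by positivity
      have := mul_nonneg h7 ht
      simp only [Nat.cast_zero, sub_zero, zero_sub]
      linarith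
  refine lt_of_lt_of_le ?_ (Finset.sum_le_sum hb)
  rw [Finset.sum_sub_distrib, ← Finset.sum_mul, Finset.sum_ite_eq' (range (m + 1)) k]
  rw [if_pos (by simp; omega)]
  have h9 : ∑ j ∈ range (m + 1), (m.choose j : ℝ) = 2 ^ m := by
    exact_mod_cast Nat.sum_range_choose m
  rw [h9]
  have : x ^ k * p ^ (m - k) - 2 ^ m * p ^ (m - k + 1) = p ^ (m - k) * (x ^ k - p * 2 ^ m) := by ring
  rw [this]
  have := pow_pos hp0 (m - k)
  positivity

section Subdiv
variable {D : Multigraph} {w : D.E → ℕ}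

theorem zeroRel_false (hw : ∀ e, 1 ≤ w e) {u v : D.V} (h : zeroRel D w u v) : u = v := by
  obtain ⟨e, he, _⟩ := h
  have := hw e
  omega

theorem chainNode_zero (e : D.E) : chainNode D w e 0 = Sum.inl (Quot.mk _ (D.src e)) := by
  simp [chainNode]

theorem chainNode_last (hw : ∀ e, 1 ≤ w e) (e : D.E) :
    chainNode D w e (w e) = Sum.inl (Quot.mk _ (D.tgt e)) := by
  have := hw e
  unfold chainNode
  rw [dif_neg (by omega), if_neg (by omega)]

theorem chainNode_mid (e : D.E) (k : Fin (w e - 1)) :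
    chainNode D w e (k.val + 1) = Sum.inr ⟨e, k⟩ := by
  have := k.2
  unfold chainNode
  rw [dif_pos (by omega)]
  simp

theorem chainNode_mid' (e : D.E) (j : ℕ) (h0 : 0 < j) (h1 : j < w e) :
    chainNode D w e j = Sum.inr ⟨e, ⟨j - 1, by omega⟩⟩ := by
  unfold chainNode
  rw [dif_pos ⟨h0, h1⟩]

theorem nd_sub_inj (hw : ∀ e, 1 ≤ w e) {F : Finset (Σ f : D.E, Fin (w f))}
    (h : ND (subdivide D w) F) (e : D.E) (i j : Fin (w e)) (hi : (⟨e, i⟩ : Σ f : D.E, Fin (w f)) ∈ F)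
    (hj : (⟨e, j⟩ : Σ f : D.E, Fin (w f)) ∈ F) (hij : i < j) : False := by
  let P : (subdivide D w).V → Prop := fun x => match x with
    | Sum.inl _ => False
    | Sum.inr ⟨f, k⟩ => f = e ∧ i.val ≤ k.val ∧ k.val < j.val
  have hj2 := j.2
  have hij' : i.val < j.val := hij
  have hP : ∀ f l, l ≤ w f → (P (chainNode D w f l) ↔ (f = e ∧ i.val < l ∧ l ≤ j.val)) := by
    intro f l hl
    have := hw f
    rcases Nat.eq_zero_or_pos l with h0 | h0
    · subst h0; rw [chainNode_zero]; simp [P]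
    rcases lt_or_eq_of_le hl with h1 | h1
    · rw [chainNode_mid' f l h0 h1]
      simp only [P]
      constructor
      · rintro ⟨rfl, h2, h3⟩; exact ⟨rfl, by omega, by omega⟩
      · rintro ⟨rfl, h2, h3⟩; exact ⟨rfl, by omega, by omega⟩
    · subst h1; rw [chainNode_last hw]
      simp only [P, false_iff]
      rintro ⟨rfl, h2, h3⟩; omega
  have h1 := h P ?_ (chainNode D w e (i.val + 1)) (chainNode D w e 0) ?_
  · rw [hP _ _ (by omega)] at h1; omega
  · rintro ⟨f, l⟩ hfl
    have hl := l.2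
    change P (chainNode D w f l.val) ↔ P (chainNode D w f (l.val + 1))
    rw [hP _ _ (by omega), hP _ _ (by omega)]
    by_cases hfe : f = e
    · subst hfe
      have h2 : l ≠ i := by rintro rfl; exact hfl hi
      have h3 : l ≠ j := by rintro rfl; exact hfl hj
      have h2 : l.val ≠ i.val := fun h => h2 (Fin.ext h)
      have h3 : l.val ≠ j.val := fun h => h3 (Fin.ext h)
      simp only [true_and]; omega
    · simp [hfe]
  · rw [hP _ _ (by omega)]; exact ⟨rfl, by omega, by omega⟩

theorem nd_sub_image (hw : ∀ e, 1 ≤ w e) {F : Finset (Σ f : D.E, Fin (w f))}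
    (h : ND (subdivide D w) F) : ND D (F.image Sigma.fst) := by
  intro P hP u v hu
  let lf : Quot (zeroRel D w) → Prop := Quot.lift P (by
    intro a b hab; rw [zeroRel_false hw hab])
  let hit : D.E → ℕ → Prop := fun e l => ∃ i : Fin (w e), (⟨e, i⟩ : Σ f : D.E, Fin (w f)) ∈ F ∧ i.val < l
  let P' : (subdivide D w).V → Prop := fun x => match x with
    | Sum.inl a => lf a
    | Sum.inr ⟨f, k⟩ => if hit f (k.val + 1) then P (D.tgt f) else P (D.src f)
  have hP' : ∀ f l, l ≤ w f → (P' (chainNode D w f l) ↔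
      if hit f l then P (D.tgt f) else P (D.src f)) := by
    intro f l hl
    have := hw f
    rcases Nat.eq_zero_or_pos l with h0 | h0
    · subst h0; rw [chainNode_zero]; simp [P', lf, hit]
    rcases lt_or_eq_of_le hl with h1 | h1
    · rw [chainNode_mid' f l h0 h1]
      simp only [P']
      rw [Nat.sub_add_cancel h0]
    · subst h1; rw [chainNode_last hw]
      simp only [P', lf]
      by_cases hh : hit f (w f)
      · rw [if_pos hh]
      · rw [if_neg hh, hP f]
        intro hf
        rw [Finset.mem_image] at hf
        obtain ⟨⟨a, b⟩, hab, rfl⟩ := hf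
        exact hh ⟨b, hab, b.2⟩
  exact h P' (by
    rintro ⟨f, l⟩ hfl
    have hl := l.2
    change P' (chainNode D w f l.val) ↔ P' (chainNode D w f (l.val + 1))
    rw [hP' _ _ (by omega), hP' _ _ (by omega)]
    have : hit f l.val ↔ hit f (l.val + 1) := by
      constructor
      · rintro ⟨i, hi, hil⟩; exact ⟨i, hi, by omega⟩
      · rintro ⟨i, hi, hil⟩
        refine ⟨i, hi, ?_⟩
        have h3 : i ≠ l := by rintro rfl; exact hfl hi
        have h3 : i.val ≠ l.val := fun h => h3 (Fin.ext h)
        omega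
    simp only [this]) (Sum.inl (Quot.mk _ u)) (Sum.inl (Quot.mk _ v)) hu

theorem nd_sub_of (hw : ∀ e, 1 ≤ w e) {F : Finset (Σ f : D.E, Fin (w f))}
    (hinj : ∀ (e : D.E) (i j : Fin (w e)), (⟨e, i⟩ : Σ f : D.E, Fin (w f)) ∈ F →
      (⟨e, j⟩ : Σ f : D.E, Fin (w f)) ∈ F → i < j → False)
    (h : ND D (F.image Sigma.fst)) : ND (subdivide D w) F := by
  intro P hP
  have step : ∀ e (j : Fin (w e)), (⟨e, j⟩ : Σ f : D.E, Fin (w f)) ∉ F →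
      (P (chainNode D w e j.val) ↔ P (chainNode D w e (j.val + 1))) := fun e j hj => hP ⟨e, j⟩ hj
  have seg : ∀ e a b, a ≤ b → b ≤ w e →
      (∀ j : Fin (w e), a ≤ j.val → j.val < b → (⟨e, j⟩ : Σ f : D.E, Fin (w f)) ∉ F) →
      (P (chainNode D w e a) ↔ P (chainNode D w e b)) := by
    intro e a b hab
    induction b, hab using Nat.le_induction with
    | base => intros; exact Iff.rfl
    | succ b hab ih =>
      intro hb hn
      rw [ih (by omega) (fun j h1 h2 => hn j h1 (by omega))]
      exact step e ⟨b, by omega⟩ (hn ⟨b, by omega⟩ hab (by simp))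
  have hQ := h (fun v => P (Sum.inl (Quot.mk _ v))) (by
    intro e he
    rw [← chainNode_zero, ← chainNode_last hw]
    apply seg e 0 (w e) (by omega) le_rfl
    intro j _ _ hj
    apply he
    rw [Finset.mem_image]
    exact ⟨_, hj, rfl⟩)
  have hall : ∀ x : (subdivide D w).V, ∃ v : D.V, (P x ↔ P (Sum.inl (Quot.mk _ v))) := by
    rintro (x | ⟨e, k⟩)
    · obtain ⟨v, rfl⟩ := Quot.exists_rep x
      exact ⟨v, Iff.rfl⟩
    · have hk := k.2
      by_cases hh : ∃ i : Fin (w e), (⟨e, i⟩ : Σ f : D.E, Fin (w f)) ∈ F ∧ i.val < k.val + 1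
      · obtain ⟨i, hi, hik⟩ := hh
        refine ⟨D.tgt e, ?_⟩
        rw [← chainNode_mid e k, ← chainNode_last hw]
        apply seg e _ _ (by omega) le_rfl
        intro j h1 _ hj
        exact hinj e i j hi hj (Fin.lt_def.2 (by omega))
      · refine ⟨D.src e, ?_⟩
        rw [← chainNode_mid e k, ← chainNode_zero]
        symm
        apply seg e _ _ (by omega) (by omega)
        intro j h1 h2 hj
        exact hh ⟨j, hj, h2⟩
  intro x y hx
  obtain ⟨u, hu⟩ := hall x
  obtain ⟨v, hv⟩ := hall y
  rw [hv]
  exact hQ u v (hu.1 hx)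

theorem nd_sub_iff (hw : ∀ e, 1 ≤ w e) (F : Finset (Σ f : D.E, Fin (w f))) :
    ND (subdivide D w) F ↔ (∀ x ∈ F, ∀ y ∈ F, x.1 = y.1 → x = y) ∧
      ND D (F.image Sigma.fst) := by
  constructor
  · intro h
    refine ⟨?_, nd_sub_image hw h⟩
    rintro ⟨e, i⟩ hi ⟨f, j⟩ hj hef
    change e = f at hef
    subst hef
    rcases lt_trichotomy i j with h1 | h1 | h1
    · exact (nd_sub_inj hw h e i j hi hj h1).elim
    · rw [h1]
    · exact (nd_sub_inj hw h e j i hj hi h1).elim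
  · rintro ⟨h1, h2⟩
    refine nd_sub_of hw ?_ h2
    intro e i j hi hj hij
    have := h1 _ hi _ hj rfl
    simp only [Sigma.mk.injEq, heq_eq_eq, true_and] at this
    exact hij.ne this

theorem card_transversal (F' : Finset D.E) :
    ((univ : Finset (Finset (Σ f : D.E, Fin (w f)))).filter fun F =>
      (∀ x ∈ F, ∀ y ∈ F, x.1 = y.1 → x = y) ∧ F.image Sigma.fst = F').card
      = ∏ e ∈ F', w e := by
  have h1 : ∏ e ∈ F', w e = (F'.pi fun e => (univ : Finset (Fin (w e)))).card := by
    rw [Finset.card_pi]; simp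
  rw [h1]
  symm
  refine Finset.card_bij (fun f _ => F'.attach.image fun e => (⟨e.1, f e.1 e.2⟩ : Σ f : D.E, Fin (w f))) ?_ ?_ ?_
  · intro f _
    simp only [mem_filter, mem_univ, true_and]
    constructor
    · intro x hx y hy hxy
      simp only [Finset.mem_image, mem_attach, true_and, Subtype.exists] at hx hy
      obtain ⟨a, ha, rfl⟩ := hx
      obtain ⟨b, hb, rfl⟩ := hy
      change a = b at hxy
      subst hxy; rfl
    · ext e
      simp
  · intro f _ g _ hfg
    funext e he
    have : (⟨e, f e he⟩ : Σ f : D.E, Fin (w f)) ∈ F'.attach.image fun e => (⟨e.1, g e.1 e.2⟩ : Σ f : D.E, Fin (w f)) := by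
      rw [← hfg, Finset.mem_image]
      exact ⟨⟨e, he⟩, by simp, rfl⟩
    rw [Finset.mem_image] at this
    obtain ⟨⟨a, ha⟩, _, h2⟩ := this
    simp only [Sigma.mk.injEq] at h2
    obtain ⟨rfl, h2⟩ := h2
    exact (eq_of_heq h2).symm
  · intro F hF
    simp only [mem_filter, mem_univ, true_and] at hF
    obtain ⟨hinj, rfl⟩ := hF
    have hex : ∀ e ∈ F.image Sigma.fst, ∃ i : Fin (w e), (⟨e, i⟩ : Σ f : D.E, Fin (w f)) ∈ F := by
      intro e he
      rw [Finset.mem_image] at he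
      obtain ⟨⟨a, b⟩, h, rfl⟩ := he
      exact ⟨b, h⟩
    choose f hf using hex
    refine ⟨f, by simp, ?_⟩
    ext ⟨a, b⟩
    rw [Finset.mem_image]
    constructor
    · rintro ⟨⟨e, he⟩, _, h⟩
      rw [← h]; exact hf e he
    · intro h
      have ha : a ∈ F.image Sigma.fst := Finset.mem_image.2 ⟨_, h, rfl⟩
      exact ⟨⟨a, ha⟩, by simp, hinj _ (hf a ha) _ h rfl⟩

theorem cN_subdivide (hw : ∀ e, 1 ≤ w e) (i : ℕ) :
    cN (subdivide D w) i =
      ∑ F ∈ (univ : Finset (Finset D.E)).filter (fun F => F.card = i ∧ ND D F), ∏ e ∈ F, w e := by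
  have h0 : cN (subdivide D w) i = ((univ : Finset (Finset (Σ f : D.E, Fin (w f)))).filter
      fun F => F.card = i ∧ (∀ x ∈ F, ∀ y ∈ F, x.1 = y.1 → x = y) ∧
        ND D (F.image Sigma.fst)).card := by
    refine Finset.card_bij (fun F _ => F) ?_ (fun _ _ _ _ h => h) ?_
    · intro F hF
      have hF := (Finset.mem_filter.1 hF).2
      exact Finset.mem_filter.2 ⟨Finset.mem_univ _, hF.1, (nd_sub_iff hw F).1 hF.2⟩
    · intro F hF
      have hF := (Finset.mem_filter.1 hF).2
      exact ⟨F, Finset.mem_filter.2 ⟨Finset.mem_univ _, hF.1, (nd_sub_iff hw F).2 hF.2⟩, rfl⟩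
  rw [h0, Finset.card_eq_sum_card_fiberwise
    (f := fun F : Finset (Σ f : D.E, Fin (w f)) => F.image Sigma.fst)
    (t := (univ : Finset (Finset D.E)).filter (fun F => F.card = i ∧ ND D F))]
  · apply Finset.sum_congr rfl
    intro F' hF'
    simp only [mem_filter, mem_univ, true_and] at hF'
    rw [← card_transversal F']
    congr 1
    ext F
    simp only [mem_filter, mem_univ, true_and]
    constructor
    · rintro ⟨⟨_, h2, h3⟩, h4⟩; exact ⟨h2, h4⟩
    · rintro ⟨h2, rfl⟩
      refine ⟨⟨?_, h2, hF'.2⟩, rfl⟩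
      rw [← hF'.1, Finset.card_image_of_injOn fun x hx y hy hxy => h2 x hx y hy hxy]
  · intro F hF
    simp only [coe_filter, mem_univ, true_and, Set.mem_setOf_eq] at hF ⊢
    refine ⟨?_, hF.2.2⟩
    rw [← hF.1, Finset.card_image_of_injOn fun x hx y hy hxy => hF.2.1 x hx y hy hxy]

theorem nE_subdivide : (subdivide D w).nE = ∑ e, w e := by
  change Fintype.card (Σ f : D.E, Fin (w f)) = _
  simp

theorem nV_subdivide (hw : ∀ e, 1 ≤ w e) : (subdivide D w).nV + D.nE = D.nV + ∑ e, w e := by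
  have h0 : (subdivide D w).nV = Fintype.card (Quot (zeroRel D w) ⊕ (Σ f : D.E, Fin (w f - 1))) := rfl
  have h1 : Fintype.card (Quot (zeroRel D w)) = D.nV := by
    apply Fintype.card_congr
    refine ⟨Quot.lift id fun a b h => zeroRel_false hw h, Quot.mk _, ?_, fun _ => rfl⟩
    intro x
    obtain ⟨v, rfl⟩ := Quot.exists_rep x
    rfl
  rw [h0, Fintype.card_sum, h1]
  simp only [Fintype.card_sigma, Fintype.card_fin]
  have h2 : D.nE = ∑ _e : D.E, 1 := by simp [Multigraph.nE]
  rw [h2, add_assoc, ← Finset.sum_add_distrib]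
  congr 1
  apply Finset.sum_congr rfl
  intro e _
  have := hw e
  omega

theorem cN_subdivide_const (q : ℕ) (hq : 1 ≤ q) (i : ℕ) :
    cN (subdivide D fun _ => q) i = q ^ i * cN D i := by
  rw [cN_subdivide fun _ => hq]
  rw [Finset.sum_congr rfl (g := fun _ => q ^ i)]
  · rw [Finset.sum_const, smul_eq_mul, mul_comm]; rfl
  · intro F hF
    simp only [mem_filter] at hF
    rw [Finset.prod_const, hF.2.1]

end Subdiv

/-- `H` is a subdivision of `D` with chain lengths `w` (flexible form). -/
structure SubD (H D : Multigraph) (w : D.E → ℕ) where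
  iota : D.V → H.V
  node : D.E → ℕ → H.V
  edge : D.E → ℕ → H.E
  pos : ∀ e, 1 ≤ w e
  n0 : ∀ e, node e 0 = iota (D.src e)
  n1 : ∀ e, node e (w e) = iota (D.tgt e)
  ends : ∀ e j, j < w e →
    (H.src (edge e j) = node e j ∧ H.tgt (edge e j) = node e (j + 1)) ∨
    (H.src (edge e j) = node e (j + 1) ∧ H.tgt (edge e j) = node e j)
  surjE : ∀ x, ∃ e j, j < w e ∧ edge e j = x
  surjV : ∀ y, (∃ v, iota v = y) ∨ ∃ e j, 0 < j ∧ j < w e ∧ node e j = y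
  cE : H.nE = ∑ e, w e
  cV : H.nV + D.nE = D.nV + ∑ e, w e

def SubD.refl (H : Multigraph) : SubD H H (fun _ => 1) where
  iota := id
  node e j := if j = 0 then H.src e else H.tgt e
  edge e _ := e
  pos _ := le_rfl
  n0 _ := by simp
  n1 _ := by simp
  ends e j hj := by
    left
    have : j = 0 := by omega
    subst this; simp
  surjE x := ⟨x, 0, by simp, rfl⟩
  surjV y := Or.inl ⟨y, rfl⟩
  cE := by simp [Multigraph.nE]
  cV := by simp [Multigraph.nE]

theorem SubD.toIso {H D : Multigraph} {w : D.E → ℕ} (s : SubD H D w) :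
    IsIso (subdivide D w) H := by
  let fv : Quot (zeroRel D w) ⊕ (Σ f : D.E, Fin (w f - 1)) → H.V := fun x => match x with
    | Sum.inl a => Quot.lift s.iota (fun _ _ h => by rw [zeroRel_false s.pos h]) a
    | Sum.inr ⟨e, k⟩ => s.node e (k.val + 1)
  let fe : (Σ f : D.E, Fin (w f)) → H.E := fun x => s.edge x.1 x.2.val
  have hfv : ∀ e j, j ≤ w e → fv (chainNode D w e j) = s.node e j := by
    intro e j hj
    have := s.pos e
    rcases Nat.eq_zero_or_pos j with h0 | h0
    · subst h0; rw [chainNode_zero, s.n0]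
    rcases lt_or_eq_of_le hj with h1 | h1
    · rw [chainNode_mid' e j h0 h1]
      simp only [fv]
      rw [Nat.sub_add_cancel h0]
    · subst h1; rw [chainNode_last s.pos, s.n1]
  have hbv : Function.Bijective fv := by
    rw [Fintype.bijective_iff_surjective_and_card]
    constructor
    · intro y
      rcases s.surjV y with ⟨v, rfl⟩ | ⟨e, j, h0, h1, rfl⟩
      · exact ⟨Sum.inl (Quot.mk _ v), rfl⟩
      · exact ⟨chainNode D w e j, hfv e j h1.le⟩
    · have h1 := nV_subdivide s.pos
      have h2 := s.cV
      change (subdivide D w).nV = H.nV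
      omega
  have hbe : Function.Bijective fe := by
    rw [Fintype.bijective_iff_surjective_and_card]
    constructor
    · intro y
      obtain ⟨e, j, h, rfl⟩ := s.surjE y
      exact ⟨⟨e, ⟨j, h⟩⟩, rfl⟩
    · change (subdivide D w).nE = H.nE
      rw [s.cE, nE_subdivide]
  refine ⟨⟨Equiv.ofBijective fv hbv, Equiv.ofBijective fe hbe, ?_⟩⟩
  rintro ⟨e, j⟩
  have hj := j.2
  change (H.src (s.edge e j.val) = fv (chainNode D w e j.val) ∧
    H.tgt (s.edge e j.val) = fv (chainNode D w e (j.val + 1))) ∨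
    (H.src (s.edge e j.val) = fv (chainNode D w e (j.val + 1)) ∧
    H.tgt (s.edge e j.val) = fv (chainNode D w e j.val))
  rw [hfv _ _ hj.le, hfv _ _ hj]
  exact s.ends e j.val hj

/-- reverse the orientation of one edge -/
def flipE (D : Multigraph) (e0 : D.E) : Multigraph where
  V := D.V
  E := D.E
  src e := if e = e0 then D.tgt e else D.src e
  tgt e := if e = e0 then D.src e else D.tgt e

theorem flip_src_ne {D : Multigraph} {e0 e : D.E} (h : e ≠ e0) :
    (flipE D e0).src e = D.src e := if_neg h
theorem flip_tgt_ne {D : Multigraph} {e0 e : D.E} (h : e ≠ e0) :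
    (flipE D e0).tgt e = D.tgt e := if_neg h
theorem flip_src_eq {D : Multigraph} {e0 : D.E} :
    (flipE D e0).src e0 = D.tgt e0 := if_pos rfl
theorem flip_tgt_eq {D : Multigraph} {e0 : D.E} :
    (flipE D e0).tgt e0 = D.src e0 := if_pos rfl

def SubD.flip {H D : Multigraph} {w : D.E → ℕ} (s : SubD H D w) (e0 : D.E) :
    SubD H (flipE D e0) w where
  iota := s.iota
  node := fun (e : D.E) j => if e = e0 then s.node e (w e - j) else s.node e j
  edge := fun (e : D.E) j => if e = e0 then s.edge e (w e - 1 - j) else s.edge e j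
  pos := s.pos
  n0 := by
    intro (e : D.E)
    simp only [flipE, Nat.sub_zero]
    split_ifs with h
    · rw [s.n1]
    · rw [s.n0]
  n1 := by
    intro (e : D.E)
    simp only [flipE, Nat.sub_self]
    split_ifs with h
    · rw [s.n0]
    · rw [s.n1]
  ends := by
    intro (e : D.E) j hj
    split_ifs with h
    · have h1 := s.ends e (w e - 1 - j) (by omega)
      rw [show w e - 1 - j + 1 = w e - j by omega, show w e - 1 - j = w e - (j + 1) by omega] at h1
      rw [show w e - 1 - j = w e - (j + 1) by omega]
      exact h1.symm
    · exact s.ends e j hj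
  surjE := by
    intro x
    obtain ⟨e, j, hj, rfl⟩ := s.surjE x
    by_cases h : e = e0
    · refine ⟨e, w e - 1 - j, by omega, ?_⟩
      rw [if_pos h]
      congr 1; omega
    · exact ⟨e, j, hj, by rw [if_neg h]⟩
  surjV := by
    intro y
    rcases s.surjV y with h | ⟨e, j, h0, hj, rfl⟩
    · exact Or.inl h
    · right
      by_cases h : e = e0
      · refine ⟨e, w e - j, by omega, by omega, ?_⟩
        rw [if_pos h]
        congr 1; omega
      · exact ⟨e, j, h0, hj, by rw [if_neg h]⟩
  cE := s.cE
  cV := s.cV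

section Merge
variable (D : Multigraph) (v : D.V) (e1 e2 : D.E) (hne : e1 ≠ e2)
  (hs : ∀ e, D.src e = v → e = e2) (ht : ∀ e, D.tgt e = v → e = e1)

/-- suppress the degree-two vertex `v` between `e1` and `e2` -/
def mergeG : Multigraph where
  V := {u : D.V // u ≠ v}
  E := {e : D.E // e ≠ e2}
  src e := ⟨D.src e.1, fun h => e.2 (hs _ h)⟩
  tgt e := if h : e.1 = e1 then ⟨D.tgt e2, fun h => hne (ht _ h).symm⟩
    else ⟨D.tgt e.1, fun h' => h (ht _ h')⟩

def mergeW (w : D.E → ℕ) : (mergeG D v e1 e2 hne hs ht).E → ℕ :=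
  fun e => if e.1 = e1 then w e1 + w e2 else w e.1

theorem mergeG_nV : (mergeG D v e1 e2 hne hs ht).nV + 1 = D.nV := by
  change Fintype.card {u : D.V // u ≠ v} + 1 = Fintype.card D.V
  have : 0 < Fintype.card D.V := Fintype.card_pos_iff.2 ⟨v⟩
  have h : Fintype.card {u : D.V // u ≠ v} = Fintype.card D.V - 1 := by
    rw [Fintype.card_subtype_compl, Fintype.card_subtype_eq]
  omega

theorem mergeG_nE : (mergeG D v e1 e2 hne hs ht).nE + 1 = D.nE := by
  change Fintype.card {u : D.E // u ≠ e2} + 1 = Fintype.card D.E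
  have : 0 < Fintype.card D.E := Fintype.card_pos_iff.2 ⟨e2⟩
  have h : Fintype.card {u : D.E // u ≠ e2} = Fintype.card D.E - 1 := by
    rw [Fintype.card_subtype_compl, Fintype.card_subtype_eq]
  omega

theorem mergeW_sum (w : D.E → ℕ) : ∑ e, mergeW D v e1 e2 hne hs ht w e = ∑ e, w e := by
  have h1 : ∑ e, mergeW D v e1 e2 hne hs ht w e =
      ∑ e ∈ univ.erase e2, (w e + if e = e1 then w e2 else 0) := by
    change ∑ e : {e : D.E // e ≠ e2}, (if e.1 = e1 then w e1 + w e2 else w e.1) = _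
    rw [Finset.sum_subtype (p := fun e => e ≠ e2) (univ.erase e2) (by simp)]
    apply Finset.sum_congr rfl
    intro e _
    by_cases h : e.1 = e1
    · simp [h]
    · simp [h]
  rw [h1, Finset.sum_add_distrib, Finset.sum_ite_eq' (univ.erase e2) e1, if_pos (by simp [hne])]
  rw [Finset.sum_erase_add _ _ (Finset.mem_univ e2)]

def SubD.merge {H : Multigraph} {w : D.E → ℕ} (s : SubD H D w)
    (h1 : D.tgt e1 = v) (h2 : D.src e2 = v) :
    SubD H (mergeG D v e1 e2 hne hs ht) (mergeW D v e1 e2 hne hs ht w) where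
  iota u := s.iota u.1
  node e j := if e.1 = e1 then (if j ≤ w e1 then s.node e1 j else s.node e2 (j - w e1))
    else s.node e.1 j
  edge e j := if e.1 = e1 then (if j < w e1 then s.edge e1 j else s.edge e2 (j - w e1))
    else s.edge e.1 j
  pos e := by
    have := s.pos e1
    have := s.pos e.1
    unfold mergeW
    split_ifs <;> omega
  n0 e := by
    by_cases h : e.1 = e1
    · simp only [h, if_true, Nat.zero_le, s.n0]
      change _ = s.iota (D.src e.1)
      rw [h]
    · simp only [h, if_false, s.n0]
      rfl
  n1 e := by
    have := s.pos e2
    by_cases h : e.1 = e1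
    · have h3 : mergeW D v e1 e2 hne hs ht w e = w e1 + w e2 := by simp [mergeW, h]
      rw [if_pos h, h3, if_neg (by omega), Nat.add_sub_cancel_left, s.n1]
      simp only [mergeG, dif_pos h]
    · have h3 : mergeW D v e1 e2 hne hs ht w e = w e.1 := by simp [mergeW, h]
      rw [if_neg h, h3, s.n1]
      simp only [mergeG, dif_neg h]
  ends e j hj := by
    by_cases h : e.1 = e1
    · have h3 : mergeW D v e1 e2 hne hs ht w e = w e1 + w e2 := by simp [mergeW, h]
      rw [h3] at hj
      simp only [if_pos h]
      by_cases h4 : j < w e1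
      · rw [if_pos h4, if_pos h4.le, if_pos (by omega)]
        exact s.ends e1 j h4
      · rw [if_neg h4, if_neg (show ¬ j + 1 ≤ w e1 by omega)]
        have h5 : (if j ≤ w e1 then s.node e1 j else s.node e2 (j - w e1)) = s.node e2 (j - w e1) := by
          split_ifs with h6
          · have : j = w e1 := by omega
            subst this
            rw [s.n1, Nat.sub_self, s.n0, h1, h2]
          · rfl
        rw [h5, show j + 1 - w e1 = (j - w e1) + 1 by omega]
        exact s.ends e2 _ (by omega)
    · have h3 : mergeW D v e1 e2 hne hs ht w e = w e.1 := by simp [mergeW, h]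
      rw [h3] at hj
      simp only [if_neg h]
      exact s.ends e.1 j hj
  surjE x := by
    obtain ⟨e, j, hj, rfl⟩ := s.surjE x
    by_cases h : e = e2
    · subst h
      refine ⟨⟨e1, hne⟩, w e1 + j, ?_, ?_⟩
      · simp [mergeW]; omega
      · simp
    · refine ⟨⟨e, h⟩, j, ?_, ?_⟩
      · unfold mergeW
        split_ifs with h3
        · change e = e1 at h3
          subst h3; omega
        · exact hj
      · by_cases h3 : e = e1
        · subst h3; simp [hj]
        · simp [h3]
  surjV y := by
    have hp := s.pos e1
    have hp2 := s.pos e2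
    rcases s.surjV y with ⟨u, rfl⟩ | ⟨e, j, h0, hj, rfl⟩
    · by_cases hu : u = v
      · right
        refine ⟨⟨e1, hne⟩, w e1, by omega, ?_, ?_⟩
        · simp [mergeW]; omega
        · simp [s.n1, h1, hu]
      · exact Or.inl ⟨⟨u, hu⟩, rfl⟩
    · right
      by_cases h : e = e2
      · subst h
        refine ⟨⟨e1, hne⟩, w e1 + j, by omega, ?_, ?_⟩
        · simp [mergeW]; omega
        · simp; omega
      · refine ⟨⟨e, h⟩, j, h0, ?_, ?_⟩
        · unfold mergeW
          split_ifs with h3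
          · change e = e1 at h3
            subst h3; omega
          · exact hj
        · by_cases h3 : e = e1
          · subst h3; simp [hj.le]
          · simp [h3]
  cE := by rw [mergeW_sum]; exact s.cE
  cV := by
    rw [mergeW_sum]
    have h3 := s.cV
    have h4 := mergeG_nV D v e1 e2 hne hs ht
    have h5 := mergeG_nE D v e1 e2 hne hs ht
    omega
end Merge

theorem SubD.nd_empty {H D : Multigraph} {w : D.E → ℕ} (s : SubD H D w) (h : ND H ∅) : ND D ∅ := by
  obtain ⟨f⟩ := s.toIso
  have h1 : ND (subdivide D w) ∅ := by rw [nd_iso f]; simpa using h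
  exact ((nd_sub_iff s.pos (∅ : Finset (Σ f : D.E, Fin (w f)))).1 h1).2

theorem SubD.nd_single {H D : Multigraph} {w : D.E → ℕ} (s : SubD H D w) (h : ∀ e, ND H {e})
    (e : D.E) : ND D {e} := by
  obtain ⟨f⟩ := s.toIso
  have h1 : ∀ x : (subdivide D w).E, ND (subdivide D w) {x} := by
    intro x
    rw [nd_iso f, Finset.map_singleton]; exact h _
  have h2 := ((nd_sub_iff s.pos ({⟨e, ⟨0, s.pos e⟩⟩} : Finset (Σ f : D.E, Fin (w f)))).1 (h1 _)).2
  rw [Finset.image_singleton] at h2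
  exact h2

theorem noB {D : Multigraph} (h1 : ∀ e, ND D {e}) (hE : D.nE = D.nV + 4) (v : D.V)
    (hd : D.deg v ≤ 2) (e : D.E) (he : ∀ f, f ≠ e → (D.src f = v ↔ D.tgt f = v)) : False := by
  have h2 := h1 e (fun u => u = v) (fun f hf => he f (by simpa using hf)) v
  have h3 : (univ.filter fun e => D.src e = v) = univ := by
    ext f; simp [h2 _ rfl]
  unfold Multigraph.deg at hd
  rw [h3, Finset.card_univ] at hd
  unfold Multigraph.nE at hE
  omega

theorem reduce {H : Multigraph} (h0 : ND H ∅) (h1 : ∀ e, ND H {e}) (hH : H.nE = H.nV + 4) (n : ℕ) :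
    ∀ (D : Multigraph) (w : D.E → ℕ), D.nV = n → SubD H D w →
      ∃ (D' : Multigraph) (w' : D'.E → ℕ), Nonempty (SubD H D' w') ∧ ∀ v, 3 ≤ D'.deg v := by
  induction n using Nat.strong_induction_on with
  | _ n ih =>
  intro D w hn s
  by_cases hall : ∀ v, 3 ≤ D.deg v
  · exact ⟨D, w, ⟨s⟩, hall⟩
  push Not at hall
  obtain ⟨v, hv⟩ := hall
  have hE : D.nE = D.nV + 4 := by
    have := s.cE; have := s.cV; omega
  have d1 := s.nd_single h1
  have hB := noB d1 hE v (by omega)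
  have hneE : Nonempty D.E := by
    rw [← Fintype.card_pos_iff]; unfold Multigraph.nE at hE; omega
  obtain ⟨ea⟩ := hneE
  -- finishing step
  have fin : ∀ (D₁ : Multigraph) (w₁ : D₁.E → ℕ) (_ : D₁.nV = n) (_ : SubD H D₁ w₁) (v : D₁.V)
      (e1 e2 : D₁.E), e1 ≠ e2 → (∀ e, D₁.src e = v → e = e2) → (∀ e, D₁.tgt e = v → e = e1) →
      D₁.tgt e1 = v → D₁.src e2 = v →
      ∃ (D' : Multigraph) (w' : D'.E → ℕ), Nonempty (SubD H D' w') ∧ ∀ v, 3 ≤ D'.deg v := by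
    intro D₁ w₁ hn₁ s₁ v e1 e2 hne hs ht h1 h2
    have := mergeG_nV D₁ v e1 e2 hne hs ht
    exact ih _ (by omega) _ _ rfl (s₁.merge D₁ v e1 e2 hne hs ht h1 h2)
  have hS : ∀ f, f ∈ (univ.filter fun e => D.src e = v) ↔ D.src f = v := by simp
  have hT : ∀ f, f ∈ (univ.filter fun e => D.tgt e = v) ↔ D.tgt f = v := by simp
  unfold Multigraph.deg at hv
  set S := univ.filter fun e => D.src e = v
  set T := univ.filter fun e => D.tgt e = v
  rcases Nat.lt_or_ge S.card 1 with c | c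
  · have hS0 : S = ∅ := by rw [← Finset.card_eq_zero]; omega
    rw [hS0] at hS
    rcases Nat.lt_or_ge T.card 2 with c' | c'
    · exfalso
      rcases Nat.lt_or_ge T.card 1 with c'' | c''
      · have hT0 : T = ∅ := by rw [← Finset.card_eq_zero]; omega
        rw [hT0] at hT
        exact hB ea fun f _ => by rw [← hS, ← hT]
      · obtain ⟨a, ha⟩ := Finset.card_eq_one.1 (show T.card = 1 by omega)
        rw [ha] at hT
        exact hB a fun f hf => by rw [← hS, ← hT]; simp [hf]
    · obtain ⟨a, b, hab, habT⟩ := Finset.card_eq_two.1 (show T.card = 2 by omega)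
      rw [habT] at hT
      have hS' : ∀ f, D.src f ≠ v := fun f hf => by simpa using (hS f).2 hf
      have hT' : ∀ f, D.tgt f = v → f = a ∨ f = b := fun f hf => by simpa using (hT f).2 hf
      refine fin (flipE D b) w hn (s.flip b) v a b hab ?_ ?_ ?_ ?_
      · intro (e : D.E) he
        by_contra hh
        exact hS' e ((flip_src_ne hh).symm.trans he)
      · intro (e : D.E) he
        simp only [flipE] at he
        split_ifs at he with hh
        · exact (hS' e he).elim
        · exact (hT' e he).resolve_right hh
      · simp only [flipE]
        rw [if_neg hab, ← hT]; simp
      · exact flip_src_eq.trans ((hT b).1 (by simp))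
  rcases Nat.lt_or_ge S.card 2 with c2 | c2
  · obtain ⟨a, ha⟩ := Finset.card_eq_one.1 (show S.card = 1 by omega)
    rw [ha] at hS
    rcases Nat.lt_or_ge T.card 1 with c' | c'
    · have hT0 : T = ∅ := by rw [← Finset.card_eq_zero]; omega
      rw [hT0] at hT
      exact (hB a fun f hf => by rw [← hS, ← hT]; simp [hf]).elim
    · obtain ⟨b, hb⟩ := Finset.card_eq_one.1 (show T.card = 1 by omega)
      rw [hb] at hT
      by_cases hab : b = a
      · subst hab
        exact (hB b fun f hf => by rw [← hS, ← hT]).elim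
      · refine fin D w hn s v b a hab ?_ ?_ ?_ ?_
        · intro e he; simpa using (hS e).2 he
        · intro e he; simpa using (hT e).2 he
        · rw [← hT]; simp
        · rw [← hS]; simp
  · obtain ⟨a, b, hab, habS⟩ := Finset.card_eq_two.1 (show S.card = 2 by omega)
    have hT0 : T = ∅ := by rw [← Finset.card_eq_zero]; omega
    rw [hT0] at hT
    rw [habS] at hS
    have hT' : ∀ f, D.tgt f ≠ v := fun f hf => by simpa using (hT f).2 hf
    have hS' : ∀ f, D.src f = v → f = a ∨ f = b := fun f hf => by simpa using (hS f).2 hf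
    refine fin (flipE D a) w hn (s.flip a) v a b hab ?_ ?_ ?_ ?_
    · intro (e : D.E) he
      simp only [flipE] at he
      split_ifs at he with hh
      · exact (hT' e he).elim
      · exact (hS' e he).resolve_left hh
    · intro (e : D.E) he
      by_contra hh
      exact hT' e ((flip_tgt_ne hh).symm.trans he)
    · exact flip_tgt_eq.trans ((hS a).1 (by simp))
    · simp only [flipE]
      rw [if_neg hab.symm, ← hS]; simp

theorem two_esymm {E : Type} (w : E → ℕ) (s : Finset E) :
    2 * ∑ F ∈ powersetCard 2 s, ∏ e ∈ F, w e + ∑ e ∈ s, w e ^ 2 = (∑ e ∈ s, w e) ^ 2 := by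
  induction s using Finset.induction_on with
  | empty => simp
  | insert a s ha ih =>
    rw [Finset.powersetCard_succ_insert ha, Finset.sum_union, Finset.sum_image,
      Finset.sum_insert ha, Finset.sum_insert ha]
    · have h1 : ∑ F ∈ powersetCard 1 s, ∏ e ∈ insert a F, w e = w a * ∑ e ∈ s, w e := by
        rw [Finset.powersetCard_one, Finset.sum_map, Finset.mul_sum]
        apply Finset.sum_congr rfl
        intro e he
        have : a ≠ e := by rintro rfl; exact ha he
        simp [Finset.prod_pair this]
      rw [h1]
      nlinarith
    · intro F hF F' hF' h
      have h1 : a ∉ F := fun h => ha ((mem_powersetCard.1 hF).1 h)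
      have h2 : a ∉ F' := fun h => ha ((mem_powersetCard.1 hF').1 h)
      rw [← Finset.erase_insert h1, ← Finset.erase_insert h2, h]
    · rw [Finset.disjoint_left]
      intro F hF hF'
      rw [Finset.mem_image] at hF'
      obtain ⟨F', _, rfl⟩ := hF'
      exact ha ((mem_powersetCard.1 hF).1 (by simp))

theorem sum_deg (D : Multigraph) : ∑ v, D.deg v = 2 * D.nE := by
  unfold Multigraph.deg
  rw [Finset.sum_add_distrib]
  have h1 : D.nE = ∑ v, (univ.filter fun e => D.src e = v).card := by
    unfold Multigraph.nE
    rw [← Finset.card_univ]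
    exact Finset.card_eq_sum_card_fiberwise (by simp)
  have h2 : D.nE = ∑ v, (univ.filter fun e => D.tgt e = v).card := by
    unfold Multigraph.nE
    rw [← Finset.card_univ]
    exact Finset.card_eq_sum_card_fiberwise (by simp)
  omega

theorem structure_thm {H : Multigraph} {q : ℕ} (hq : 1 ≤ q) (hH : memG H (12 * q - 4) (12 * q))
    (h1 : 12 * q ≤ cN H 1) :
    cN H 2 ≤ 66 * q ^ 2 ∧ (66 * q ^ 2 ≤ cN H 2 → ∃ D : Multigraph,
      IsIso (subdivide D fun _ => q) H ∧ D.nV = 8 ∧ D.nE = 12 ∧ (∀ v, D.deg v = 3) ∧ ND D ∅ ∧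
      cN D 2 = 66) := by
  obtain ⟨hV, hE, hc⟩ := hH
  have hc := (connected_iff H).1 hc
  have hs : ∀ e, ND H {e} := fun e =>
    nd_of_cN (i := 1) (by rw [hE]; simpa using h1) {e} (by simp)
  obtain ⟨D, w, ⟨s⟩, hdeg⟩ := reduce hc hs (by omega) H.nV H _ rfl (SubD.refl H)
  have hiso := s.toIso
  have hsum : ∑ e, w e = 12 * q := by rw [← s.cE, hE]
  have hDE : D.nE = D.nV + 4 := by have := s.cV; omega
  have hds := sum_deg D
  have h3V : 3 * D.nV ≤ ∑ v, D.deg v := by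
    have := Finset.sum_le_sum (s := univ) (f := fun _ : D.V => 3) fun v _ => hdeg v
    simpa [Multigraph.nV, mul_comm] using this
  have hV8 : D.nV ≤ 8 := by omega
  have hE12 : D.nE ≤ 12 := by omega
  have hle : cN H 2 ≤ ∑ F ∈ powersetCard 2 univ, ∏ e ∈ F, w e := by
    rw [← cN_iso hiso, cN_subdivide s.pos]
    apply Finset.sum_le_sum_of_subset
    intro F hF
    simp only [mem_filter, mem_univ, true_and] at hF
    simp [mem_powersetCard, hF.1]
  have h2 := two_esymm w univ
  rw [hsum] at h2
  have hsq : ∑ e, ((w e : ℤ) - q) ^ 2 = (∑ e, w e ^ 2 : ℕ) - 24 * q ^ 2 + D.nE * q ^ 2 := by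
    have e1 : ∀ e, ((w e : ℤ) - q) ^ 2 = (w e : ℤ) ^ 2 - 2 * q * w e + q ^ 2 := fun e => by ring
    simp only [e1, Finset.sum_add_distrib, Finset.sum_sub_distrib, ← Finset.mul_sum]
    have e2 : ∑ e, (w e : ℤ) = 12 * q := by exact_mod_cast hsum
    rw [e2]
    simp only [Finset.sum_const, Finset.card_univ, nsmul_eq_mul, Multigraph.nE]
    push_cast
    ring
  have hnn : 0 ≤ ∑ e, ((w e : ℤ) - q) ^ 2 := Finset.sum_nonneg fun _ _ => sq_nonneg _
  set X := ∑ F ∈ powersetCard 2 univ, ∏ e ∈ F, w e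
  set Y := ∑ e, w e ^ 2
  have hEz : (D.nE : ℤ) ≤ 12 := by exact_mod_cast hE12
  have h2z : 2 * (X : ℤ) + Y = (12 * q) ^ 2 := by exact_mod_cast h2
  have hqz : (1 : ℤ) ≤ q := by exact_mod_cast hq
  have hXle : (X : ℤ) ≤ 66 * q ^ 2 := by nlinarith [sq_nonneg (q : ℤ)]
  have hXle' : X ≤ 66 * q ^ 2 := by exact_mod_cast hXle
  refine ⟨hle.trans hXle', fun h66 => ?_⟩
  have hXge : (66 : ℤ) * q ^ 2 ≤ X := by exact_mod_cast h66.trans hle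
  have hDE12 : D.nE = 12 := by
    by_contra hne
    have : (D.nE : ℤ) ≤ 11 := by
      have : D.nE ≤ 11 := by omega
      exact_mod_cast this
    nlinarith [sq_nonneg (q : ℤ)]
  have hzero : ∑ e, ((w e : ℤ) - q) ^ 2 = 0 := by
    rw [hDE12] at hsq
    push_cast at hsq
    nlinarith
  have hw : w = fun _ => q := by
    funext e
    have := (Finset.sum_eq_zero_iff_of_nonneg fun e _ => sq_nonneg ((w e : ℤ) - q)).1 hzero e
      (Finset.mem_univ e)
    have : (w e : ℤ) = q := by
      have := pow_eq_zero_iff (two_ne_zero) |>.1 this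
      linarith
    exact_mod_cast this
  subst hw
  have hDV : D.nV = 8 := by omega
  refine ⟨D, hiso, hDV, hDE12, ?_, s.nd_empty hc, ?_⟩
  · have h4 : ∑ v, D.deg v = ∑ _v : D.V, 3 := by
      rw [hds, hDE12]
      have : Fintype.card D.V = 8 := hDV
      simp [this]
    have h5 := (Finset.sum_eq_sum_iff_of_le (s := univ) (f := fun _ : D.V => 3)
      (fun v _ => hdeg v)).1 h4.symm
    intro v
    exact (h5 v (Finset.mem_univ v)).symm
  · have h6 := cN_iso hiso 2
    rw [cN_subdivide_const q hq] at h6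
    have hq2 : 0 < q ^ 2 := by positivity
    have h7 : cN H 2 = 66 * q ^ 2 := le_antisymm (hle.trans hXle') h66
    rw [h7, mul_comm] at h6
    exact Nat.eq_of_mul_eq_mul_right hq2 h6

section Cubic
variable {D : Multigraph}

/-- edges with exactly one end in `A` -/
def cutP (D : Multigraph) (A : Finset D.V) : Finset D.E :=
  univ.filter fun e => ¬ (D.src e ∈ A ↔ D.tgt e ∈ A)

def starP (D : Multigraph) (v : D.V) : Finset D.E :=
  univ.filter fun e => D.src e = v ∨ D.tgt e = v

theorem mem_starP {v : D.V} {e : D.E} : e ∈ starP D v ↔ D.src e = v ∨ D.tgt e = v := by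
  simp [starP]

theorem mem_cutP {A : Finset D.V} {e : D.E} : e ∈ cutP D A ↔ ¬ (D.src e ∈ A ↔ D.tgt e ∈ A) := by
  simp [cutP]

theorem cut_not_nd {A : Finset D.V} {u v : D.V} (hu : u ∈ A) (hv : v ∉ A) : ¬ ND D (cutP D A) := by
  intro h
  refine hv (h (fun x => x ∈ A) ?_ u v hu)
  intro e he
  by_contra h'
  exact he (mem_cutP.2 h')

theorem cut_ge (h2 : ∀ F : Finset D.E, F.card ≤ 2 → ND D F) {A : Finset D.V} {u : D.V}
    (hu : u ∈ A) (hA : A.card < D.nV) : 3 ≤ (cutP D A).card := by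
  have : ∃ v, v ∉ A := by
    by_contra hh
    push Not at hh
    have : A = univ := by ext x; simp [hh x]
    rw [this, Finset.card_univ] at hA
    exact lt_irrefl _ hA
  obtain ⟨v, hv⟩ := this
  by_contra hh
  exact cut_not_nd hu hv (h2 _ (by omega))

variable (hV : D.nV = 8) (h3 : ∀ v, D.deg v = 3) (h2 : ∀ F : Finset D.E, F.card ≤ 2 → ND D F)
include hV h3 h2

theorem noloop (e : D.E) : D.src e ≠ D.tgt e := by
  intro he
  have hc := cut_ge h2 (A := {D.src e}) (u := D.src e) (by simp) (by simp [hV])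
  have hd := h3 (D.src e)
  unfold Multigraph.deg at hd
  set S := univ.filter fun f => D.src f = D.src e with hS
  set T := univ.filter fun f => D.tgt f = D.src e with hT
  have hsub : cutP D {D.src e} ⊆ S.erase e ∪ T.erase e := by
    intro f hf
    rw [mem_cutP] at hf
    simp only [mem_singleton] at hf
    simp only [mem_union, mem_erase, hS, hT, mem_filter, mem_univ, true_and]
    have : f ≠ e := by rintro rfl; apply hf; rw [he]
    tauto
  have h4 := Finset.card_le_card hsub
  have h5 := Finset.card_union_le (S.erase e) (T.erase e)
  have h6 : e ∈ S := by simp [hS]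
  have h7 : e ∈ T := by simp [hT, he]
  have h8 := Finset.card_erase_add_one h6
  have h9 := Finset.card_erase_add_one h7
  omega

theorem star_card (v : D.V) : (starP D v).card = 3 := by
  have hd := h3 v
  unfold Multigraph.deg at hd
  rw [← hd]
  unfold starP
  rw [Finset.filter_or, Finset.card_union_of_disjoint]
  rw [Finset.disjoint_left]
  intro e h1 h1'
  simp only [mem_filter, mem_univ, true_and] at h1 h1'
  exact noloop hV h3 h2 e (h1.trans h1'.symm)

theorem simpleP {u v : D.V} (huv : u ≠ v) {e f : D.E} (heu : e ∈ starP D u) (hev : e ∈ starP D v)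
    (hfu : f ∈ starP D u) (hfv : f ∈ starP D v) : e = f := by
  by_contra hef
  have hc := cut_ge h2 (A := {u, v}) (u := u) (by simp) (by rw [Finset.card_pair huv, hV]; norm_num)
  have hsub : cutP D {u, v} ⊆ ((starP D u).erase e).erase f ∪ ((starP D v).erase e).erase f := by
    intro g hg
    rw [mem_cutP] at hg
    have h1 : g ≠ e := by
      rintro rfl
      rw [mem_starP] at heu hev
      apply hg; simp only [mem_insert, mem_singleton]
      grind
    have h2 : g ≠ f := by
      rintro rfl
      rw [mem_starP] at hfu hfv
      apply hg; simp only [mem_insert, mem_singleton]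
      grind
    simp only [mem_union, mem_erase, mem_starP]
    simp only [mem_insert, mem_singleton] at hg
    grind
  have h4 := Finset.card_le_card hsub
  have h5 := Finset.card_union_le (((starP D u).erase e).erase f) (((starP D v).erase e).erase f)
  have a1 := Finset.card_erase_add_one heu
  have a2 := Finset.card_erase_add_one hev
  have a3 := Finset.card_erase_add_one (Finset.mem_erase.2 ⟨fun h => hef h.symm, hfu⟩ : f ∈ (starP D u).erase e)
  have a4 := Finset.card_erase_add_one (Finset.mem_erase.2 ⟨fun h => hef h.symm, hfv⟩ : f ∈ (starP D v).erase e)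
  have := star_card hV h3 h2 u
  have := star_card hV h3 h2 v
  omega

theorem starP_inj : Function.Injective (starP D) := by
  intro u v huv
  by_contra hne
  obtain ⟨e, he, f, hf, hef⟩ := Finset.one_lt_card.1
    (show 1 < (starP D u).card by rw [star_card hV h3 h2]; norm_num)
  exact hef (simpleP hV h3 h2 hne he (huv ▸ he) hf (huv ▸ hf))

theorem star_not_nd (v : D.V) : ¬ ND D (starP D v) := by
  have h1 : cutP D {v} = starP D v := by
    ext e
    rw [mem_cutP, mem_starP]
    simp only [mem_singleton]
    have := noloop hV h3 h2 e
    grind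
  rw [← h1]
  have : ∃ u, u ∉ ({v} : Finset D.V) := by
    by_contra hh
    push Not at hh
    have h5 : ({v} : Finset D.V) = univ := by ext x; simp [hh x]
    have h4 : ({v} : Finset D.V).card = 8 := by rw [h5, Finset.card_univ]; exact hV
    simp at h4
  obtain ⟨u, hu⟩ := this
  exact cut_not_nd (u := v) (by simp) hu

theorem c3_bound (hE : D.nE = 12) : cN D 3 ≤ 212 ∧
    (212 ≤ cN D 3 → ∀ F : Finset D.E, F.card = 3 → ¬ ND D F → ∃ v, F = starP D v) := by
  set B := (univ : Finset (Finset D.E)).filter (fun F => F.card = 3 ∧ ¬ ND D F) with hB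
  have hsum : cN D 3 + B.card = 220 := by
    have h1 : (powersetCard 3 (univ : Finset D.E)).card = 220 := by
      rw [Finset.card_powersetCard, Finset.card_univ]
      change D.nE.choose 3 = _
      rw [hE]; rfl
    rw [← h1]
    unfold cN
    rw [hB, ← Finset.card_union_of_disjoint]
    · congr 1
      ext F
      simp only [mem_union, mem_filter, mem_univ, true_and, mem_powersetCard, subset_univ]
      tauto
    · rw [Finset.disjoint_left]
      intro F h1 h2
      simp only [mem_filter] at h1 h2
      exact h2.2.2 h1.2.2
  have himg : univ.image (starP D) ⊆ B := by
    intro F hF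
    rw [Finset.mem_image] at hF
    obtain ⟨v, _, rfl⟩ := hF
    simp only [hB, mem_filter, mem_univ, true_and]
    exact ⟨star_card hV h3 h2 v, star_not_nd hV h3 h2 v⟩
  have hcard : (univ.image (starP D)).card = 8 := by
    rw [Finset.card_image_of_injective _ (starP_inj hV h3 h2), Finset.card_univ]; exact hV
  have h4 := Finset.card_le_card himg
  refine ⟨by omega, fun h F hF hn => ?_⟩
  have heq := Finset.eq_of_subset_of_card_le himg (by omega)
  have hFB : F ∈ B := by simp [hB, hF, hn]
  rw [← heq, Finset.mem_image] at hFB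
  obtain ⟨v, _, rfl⟩ := hFB
  exact ⟨v, rfl⟩

theorem adj_star {u v : D.V} (h : D.Adj u v) : ∃ e, e ∈ starP D u ∧ e ∈ starP D v ∧
    (∀ A : Finset D.V, u ∈ A → v ∈ A → e ∉ cutP D A) := by
  obtain ⟨e, he⟩ := h
  refine ⟨e, ?_, ?_, ?_⟩
  · rw [mem_starP]; tauto
  · rw [mem_starP]; tauto
  · intro A hu hv
    rw [mem_cutP]
    rcases he with ⟨rfl, rfl⟩ | ⟨rfl, rfl⟩ <;> simp [hu, hv]

theorem adj_ne {u v : D.V} (h : D.Adj u v) : u ≠ v := by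
  obtain ⟨e, he⟩ := h
  have := noloop hV h3 h2 e
  rintro rfl
  rcases he with ⟨h, h'⟩ | ⟨h, h'⟩ <;> exact this (h.trans h'.symm)

theorem trianglefree (h0 : ND D ∅)
    (hst : ∀ F : Finset D.E, F.card = 3 → ¬ ND D F → ∃ v, F = starP D v)
    {a b c : D.V} (hab : D.Adj a b) (hbc : D.Adj b c) (hac : D.Adj a c) : False := by
  have nab := adj_ne hV h3 h2 hab
  have nbc := adj_ne hV h3 h2 hbc
  have nac := adj_ne hV h3 h2 hac
  obtain ⟨x, xa, xb, hx⟩ := adj_star hV h3 h2 hab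
  obtain ⟨y, yb, yc, hy⟩ := adj_star hV h3 h2 hbc
  obtain ⟨z, za, zc, hz⟩ := adj_star hV h3 h2 hac
  have hA3 : ({a, b, c} : Finset D.V).card = 3 := by
    rw [Finset.card_eq_three]; exact ⟨a, b, c, nab, nac, nbc, rfl⟩
  have hx := hx {a, b, c} (by simp) (by simp)
  have hy := hy {a, b, c} (by simp) (by simp)
  have hz := hz {a, b, c} (by simp) (by simp)
  have hcge := cut_ge h2 (A := {a, b, c}) (u := a) (by simp) (by rw [hA3, hV]; norm_num)
  have xz : x ≠ z := by
    rintro rfl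
    rw [mem_starP] at xa xb zc
    grind
  have xy : x ≠ y := by
    rintro rfl
    rw [mem_starP] at xa xb yc
    grind
  have yz : y ≠ z := by
    rintro rfl
    rw [mem_starP] at za yb zc
    grind
  have hsub : cutP D {a, b, c} ⊆ ((starP D a).erase x).erase z ∪
      (((starP D b).erase x).erase y ∪ ((starP D c).erase y).erase z) := by
    intro g hg
    have g1 : g ≠ x := by rintro rfl; exact hx hg
    have g2 : g ≠ y := by rintro rfl; exact hy hg
    have g3 : g ≠ z := by rintro rfl; exact hz hg
    rw [mem_cutP] at hg
    simp only [mem_union, mem_erase, mem_starP]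
    simp only [mem_insert, mem_singleton] at hg
    grind
  have c1 := Finset.card_le_card hsub
  have c2 := Finset.card_union_le (((starP D a).erase x).erase z)
      (((starP D b).erase x).erase y ∪ ((starP D c).erase y).erase z)
  have c3 := Finset.card_union_le (((starP D b).erase x).erase y) (((starP D c).erase y).erase z)
  have a1 := Finset.card_erase_add_one xa
  have a2 := Finset.card_erase_add_one xb
  have a3 := Finset.card_erase_add_one yc
  have b1 := Finset.card_erase_add_one (Finset.mem_erase.2 ⟨fun h => xz h.symm, za⟩ : z ∈ (starP D a).erase x)
  have b2 := Finset.card_erase_add_one (Finset.mem_erase.2 ⟨fun h => xy h.symm, yb⟩ : y ∈ (starP D b).erase x)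
  have b3 := Finset.card_erase_add_one (Finset.mem_erase.2 ⟨fun h => yz h.symm, zc⟩ : z ∈ (starP D c).erase y)
  have d1 := star_card hV h3 h2 a
  have d2 := star_card hV h3 h2 b
  have d3 := star_card hV h3 h2 c
  have hex : ∀ A : Finset D.V, A.card ≤ 4 → ∃ t, t ∉ A := by
    intro A hA
    by_contra hh
    push Not at hh
    have h5 : A = univ := by ext x; simp [hh x]
    have h4 : A.card = 8 := by rw [h5, Finset.card_univ]; exact hV
    omega
  obtain ⟨r, hr⟩ := hex {a, b, c} (by omega)
  obtain ⟨t, ht⟩ := hst _ (by omega) (cut_not_nd (A := {a, b, c}) (u := a) (by simp) hr)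
  have ta : t ≠ a := by rintro rfl; rw [ht] at hx; exact hx xa
  have tb : t ≠ b := by rintro rfl; rw [ht] at hx; exact hx xb
  have tc : t ≠ c := by rintro rfl; rw [ht] at hy; exact hy yc
  obtain ⟨s, hs⟩ := hex {a, b, c, t} (Finset.card_le_four)
  refine hs (h0 (fun u => u ∈ ({a, b, c, t} : Finset D.V)) ?_ a s (by simp))
  intro e _
  have hcs : e ∈ cutP D {a, b, c} ↔ e ∈ starP D t := by rw [ht]
  rw [mem_cutP, mem_starP] at hcs
  have := noloop hV h3 h2 e
  simp only [mem_insert, mem_singleton] at hcs ⊢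
  grind

theorem nbr_card (v : D.V) : (univ.filter fun u => D.Adj v u).card = 3 := by
  rw [← star_card hV h3 h2 v]
  symm
  refine Finset.card_bij (fun e _ => if D.src e = v then D.tgt e else D.src e) ?_ ?_ ?_
  · intro e he
    rw [mem_starP] at he
    simp only [mem_filter, mem_univ, true_and]
    refine ⟨e, ?_⟩
    split_ifs <;> tauto
  · intro e he f hf hef
    have hle := noloop hV h3 h2 e
    have hlf := noloop hV h3 h2 f
    rw [mem_starP] at he hf
    by_cases h1 : D.src e = v
    · rw [if_pos h1] at hef
      refine simpleP hV h3 h2 (u := v) (v := D.tgt e) (by rw [← h1]; exact hle) ?_ ?_ ?_ ?_ <;>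
      rw [mem_starP] <;> split_ifs at hef <;> tauto
    · rw [if_neg h1] at hef
      refine simpleP hV h3 h2 (u := v) (v := D.src e) (fun h => h1 h.symm) ?_ ?_ ?_ ?_ <;>
      rw [mem_starP] <;> split_ifs at hef <;> grind
  · intro u hu
    simp only [mem_filter, mem_univ, true_and] at hu
    obtain ⟨e, he⟩ := hu
    have hle := noloop hV h3 h2 e
    refine ⟨e, ?_, ?_⟩
    · rw [mem_starP]; tauto
    · split_ifs <;> grind
end Cubic

theorem isIso_trans {A B C : Multigraph} (h1 : IsIso A B) (h2 : IsIso B C) : IsIso A C := by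
  obtain ⟨f⟩ := h1
  obtain ⟨g⟩ := h2
  refine ⟨⟨f.vMap.trans g.vMap, f.eMap.trans g.eMap, ?_⟩⟩
  intro e
  simp only [Equiv.trans_apply]
  rcases f.ends_eq e with ⟨a, b⟩ | ⟨a, b⟩ <;> rcases g.ends_eq (f.eMap e) with ⟨c, d⟩ | ⟨c, d⟩ <;>
    rw [a] at * <;> rw [b] at * <;> simp [c, d]

theorem subdivide_iso {D D' : Multigraph} (q : ℕ) (hq : 1 ≤ q) (h : IsIso D D') :
    IsIso (subdivide D fun _ => q) (subdivide D' fun _ => q) := by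
  obtain ⟨f⟩ := h
  have hE : D.nE = D'.nE := Fintype.card_congr f.eMap
  have hVV : D.nV = D'.nV := Fintype.card_congr f.vMap
  have hw : ∀ e : D'.E, 1 ≤ (fun _ : D'.E => q) e := fun _ => hq
  let good : D.E → Prop := fun e =>
    D'.src (f.eMap e) = f.vMap (D.src e) ∧ D'.tgt (f.eMap e) = f.vMap (D.tgt e)
  have hbad : ∀ e, ¬ good e →
    D'.src (f.eMap e) = f.vMap (D.tgt e) ∧ D'.tgt (f.eMap e) = f.vMap (D.src e) :=
    fun e he => (f.ends_eq e).resolve_left he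
  let mkE : D'.E → ℕ → (subdivide D' fun _ => q).E :=
    fun e k => (⟨e, ⟨k % q, Nat.mod_lt _ hq⟩⟩ : Σ _ : D'.E, Fin q)
  have hmk : ∀ e (k : Fin q), mkE e k.val = (⟨e, k⟩ : Σ _ : D'.E, Fin q) := by
    intro e k
    have : (⟨k.val % q, Nat.mod_lt _ hq⟩ : Fin q) = k := Fin.ext (Nat.mod_eq_of_lt k.2)
    simp only [mkE, this]; rfl
  have hsrc : ∀ e k, k < q → (subdivide D' fun _ => q).src (mkE e k) = chainNode D' (fun _ => q) e k := by
    intro e k hk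
    change chainNode D' (fun _ => q) e (k % q) = _
    rw [Nat.mod_eq_of_lt hk]
  have htgt : ∀ e k, k < q →
      (subdivide D' fun _ => q).tgt (mkE e k) = chainNode D' (fun _ => q) e (k + 1) := by
    intro e k hk
    change chainNode D' (fun _ => q) e (k % q + 1) = _
    rw [Nat.mod_eq_of_lt hk]
  have s : SubD (subdivide D' fun _ => q) D (fun _ => q) :=
    { iota := fun v => Sum.inl (Quot.mk _ (f.vMap v))
      node := fun e j => chainNode D' (fun _ => q) (f.eMap e) (if good e then j else q - j)
      edge := fun e j => mkE (f.eMap e) (if good e then j else q - 1 - j)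
      pos := fun _ => hq
      n0 := by
        intro e
        split_ifs with hg
        · rw [chainNode_zero, hg.1]
        · rw [Nat.sub_zero]
          have := chainNode_last (D := D') (w := fun _ => q) hw (f.eMap e)
          rw [this, (hbad e hg).2]
      n1 := by
        intro e
        split_ifs with hg
        · have := chainNode_last (D := D') (w := fun _ => q) hw (f.eMap e)
          rw [this, hg.2]
        · rw [Nat.sub_self, chainNode_zero, (hbad e hg).1]
      ends := by
        intro e j hj
        replace hj : j < q := hj
        by_cases hg : good e
        · rw [if_pos hg, if_pos hg, if_pos hg]
          left; exact ⟨hsrc _ _ hj, htgt _ _ hj⟩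
        · rw [if_neg hg, if_neg hg, if_neg hg]
          right
          refine ⟨?_, ?_⟩
          · rw [hsrc _ _ (by omega)]
            congr 1; omega
          · rw [htgt _ _ (by omega)]
            congr 1; omega
      surjE := by
        rintro ⟨e, j⟩
        have hj : j.val < q := j.2
        by_cases hg : good (f.eMap.symm e)
        · refine ⟨f.eMap.symm e, j.val, hj, ?_⟩
          rw [if_pos hg, Equiv.apply_symm_apply]
          exact hmk e j
        · refine ⟨f.eMap.symm e, q - 1 - j.val, by change _ < q; omega, ?_⟩
          rw [if_neg hg, Equiv.apply_symm_apply, show q - 1 - (q - 1 - j.val) = j.val by omega]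
          exact hmk e j
      surjV := by
        rintro (x | ⟨e, j⟩)
        · left
          obtain ⟨v, rfl⟩ := Quot.exists_rep x
          exact ⟨f.vMap.symm v, by rw [Equiv.apply_symm_apply]⟩
        · right
          have hj : j.val < q - 1 := j.2
          have key : chainNode D' (fun _ => q) e (j.val + 1) = Sum.inr ⟨e, j⟩ := by
            rw [chainNode_mid' e (j.val + 1) (by omega) (by change _ < q; omega)]
            simp
          by_cases hg : good (f.eMap.symm e)
          · refine ⟨f.eMap.symm e, j.val + 1, by omega, by change _ < q; omega, ?_⟩
            rw [if_pos hg, Equiv.apply_symm_apply]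
            exact key
          · refine ⟨f.eMap.symm e, q - (j.val + 1), by omega, by change _ < q; omega, ?_⟩
            rw [if_neg hg, Equiv.apply_symm_apply]
            rw [show q - (q - (j.val + 1)) = j.val + 1 by omega]
            exact key
      cE := by rw [nE_subdivide]; simp; left; exact hE.symm
      cV := by
        have := nV_subdivide (D := D') (w := fun _ => q) hw
        simp only [sum_const, card_univ, smul_eq_mul] at this ⊢
        have e1 : Fintype.card D.E = Fintype.card D'.E := hE
        rw [hE, hVV, e1]; exact this }
  exact s.toIso

theorem iso_of_adj {Q D : Multigraph} (hs : Q.IsSimple) (σ : Q.V ≃ D.V)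
    (ha : ∀ e, D.Adj (σ (Q.src e)) (σ (Q.tgt e))) (hE : Q.nE = D.nE) : IsIso Q D := by
  choose g hg using ha
  have hinj : Function.Injective g := by
    intro e e' h
    have h1 := hg e
    have h2 := hg e'
    rw [h] at h1
    apply hs.2
    rcases h1 with ⟨a, b⟩ | ⟨a, b⟩ <;> rcases h2 with ⟨c, d⟩ | ⟨c, d⟩
    · exact Or.inl ⟨σ.injective (a.symm.trans c), σ.injective (b.symm.trans d)⟩
    · exact Or.inr ⟨σ.injective (a.symm.trans c), σ.injective (b.symm.trans d)⟩
    · exact Or.inr ⟨σ.injective (b.symm.trans d), σ.injective (a.symm.trans c)⟩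
    · exact Or.inl ⟨σ.injective (b.symm.trans d), σ.injective (a.symm.trans c)⟩
  have hb : Function.Bijective g := (Fintype.bijective_iff_injective_and_card g).2 ⟨hinj, hE⟩
  exact ⟨⟨σ, Equiv.ofBijective g hb, hg⟩⟩

theorem nd_two {D : Multigraph} (hE : D.nE = 12) (h : cN D 2 = 66) :
    ∀ F : Finset D.E, F.card ≤ 2 → ND D F := by
  intro F hF
  obtain ⟨F', h1, h2⟩ := Finset.exists_superset_card_eq hF
    (show 2 ≤ Fintype.card D.E by have := hE; unfold Multigraph.nE at this; omega)
  exact ND.mono (nd_of_cN (by rw [hE, h]; decide) F' h2) h1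

/-- the cube graph -/
def cubeG : Multigraph where
  V := Fin 8
  E := Fin 12
  src := ![0, 0, 0, 1, 1, 2, 2, 3, 4, 4, 5, 6]
  tgt := ![1, 2, 4, 3, 5, 3, 6, 7, 5, 6, 7, 7]

def clsMat (b24 b25 b26 b27 b34 b35 b36 b37 b46 b47 b56 b57 b67 : Bool) : Fin 8 → Fin 8 → Bool :=
  ![![false, true, true, true, false, false, false, false],
    ![true, false, false, false, true, true, false, false],
    ![true, false, false, false, b24, b25, b26, b27],
    ![true, false, false, false, b34, b35, b36, b37],
    ![false, true, b24, b34, false, false, b46, b47],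
    ![false, true, b25, b35, false, false, b56, b57],
    ![false, false, b26, b36, b46, b56, false, b67],
    ![false, false, b27, b37, b47, b57, b67, false]]

def permW : List (Fin 8 → Fin 8) :=
  [![0, 1, 4, 7, 3, 5, 6, 2], ![0, 1, 4, 6, 3, 5, 7, 2], ![0, 1, 5, 7, 3, 4, 6, 2],
   ![0, 1, 5, 6, 3, 4, 7, 2], ![0, 1, 4, 7, 2, 5, 6, 3], ![0, 2, 7, 4, 1, 5, 6, 3],
   ![0, 1, 4, 6, 2, 5, 7, 3], ![0, 2, 6, 4, 1, 5, 7, 3], ![0, 1, 5, 7, 2, 4, 6, 3],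
   ![0, 2, 7, 5, 1, 4, 6, 3], ![0, 1, 5, 6, 2, 4, 7, 3], ![0, 2, 6, 5, 1, 4, 7, 3]]

def permC : List (Fin 8 → Fin 8) :=
  [![0, 1, 2, 5, 3, 4, 7, 6], ![0, 1, 2, 5, 3, 4, 6, 7], ![0, 1, 2, 4, 3, 5, 7, 6],
   ![0, 1, 2, 4, 3, 5, 6, 7]]

def edW : List (Fin 8 × Fin 8) :=
  [(0, 1), (1, 2), (2, 3), (3, 4), (4, 5), (5, 6), (6, 7), (7, 0), (0, 4), (1, 5), (2, 6), (3, 7)]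

def edC : List (Fin 8 × Fin 8) :=
  [(0, 1), (0, 2), (0, 4), (1, 3), (1, 5), (2, 3), (2, 6), (3, 7), (4, 5), (4, 6), (5, 7), (6, 7)]

def okP (M : Fin 8 → Fin 8 → Bool) (L : List (Fin 8 → Fin 8)) (E : List (Fin 8 × Fin 8)) : Bool :=
  L.any fun s => E.all fun e => M (s e.1) (s e.2)

set_option maxRecDepth 100000 in
set_option synthInstance.maxSize 100000 in
set_option synthInstance.maxHeartbeats 1000000 in
theorem cls_bool : ∀ b24 b25 b26 b27 : Bool,
    (b24.toNat + b25.toNat + b26.toNat + b27.toNat == 2) = true →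
    ∀ b34 b35 b36 b37 : Bool,
    (b34.toNat + b35.toNat + b36.toNat + b37.toNat == 2) = true →
    ∀ b46 b47 : Bool,
    (b24.toNat + b34.toNat + b46.toNat + b47.toNat == 2) = true →
    (!(b24 && b46 && b26) && !(b24 && b47 && b27) && !(b34 && b46 && b36) &&
      !(b34 && b47 && b37)) = true →
    ∀ b56 b57 : Bool,
    (b25.toNat + b35.toNat + b56.toNat + b57.toNat == 2) = true →
    (!(b25 && b56 && b26) && !(b25 && b57 && b27) && !(b35 && b56 && b36) &&
      !(b35 && b57 && b37)) = true →
    ∀ b67 : Bool,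
    (b26.toNat + b36.toNat + b46.toNat + b56.toNat + b67.toNat == 3) = true →
    (b27.toNat + b37.toNat + b47.toNat + b57.toNat + b67.toNat == 3) = true →
    (!(b26 && b67 && b27) && !(b36 && b67 && b37) && !(b46 && b67 && b47) &&
      !(b56 && b67 && b57)) = true →
    (okP (clsMat b24 b25 b26 b27 b34 b35 b36 b37 b46 b47 b56 b57 b67) permW edW ||
     okP (clsMat b24 b25 b26 b27 b34 b35 b36 b37 b46 b47 b56 b57 b67) permC edC) = true := by
  decide +kernel

theorem permW_inj : ∀ s ∈ permW, Function.Injective s := by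
  have h : (permW.all fun s => decide (∀ i j : Fin 8, s i = s j → i = j)) = true := by
    decide +kernel
  intro s hs
  have := List.all_eq_true.1 h s hs
  exact (decide_eq_true_iff (p := ∀ i j : Fin 8, s i = s j → i = j)).1 this
theorem permC_inj : ∀ s ∈ permC, Function.Injective s := by
  have h : (permC.all fun s => decide (∀ i j : Fin 8, s i = s j → i = j)) = true := by
    decide +kernel
  intro s hs
  have := List.all_eq_true.1 h s hs
  exact (decide_eq_true_iff (p := ∀ i j : Fin 8, s i = s j → i = j)).1 this

theorem okP_spec {M : Fin 8 → Fin 8 → Bool} {L : List (Fin 8 → Fin 8)} {E : List (Fin 8 × Fin 8)}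
    (h : okP M L E = true) : ∃ s ∈ L, ∀ e ∈ E, M (s e.1) (s e.2) = true := by
  simpa [okP, List.any_eq_true, List.all_eq_true] using h

theorem label {V : Type} [Fintype V] (hV : Fintype.card V = 8) (A : V → V → Prop)
    (hs : ∀ u v, A u v → A v u) (hi : ∀ u, ¬ A u u)
    (h3 : ∀ v, (univ.filter fun u => A v u).card = 3)
    (ht : ∀ a b c, A a b → A b c → A a c → False) :
    ∃ τ : Fin 8 ≃ V, (∀ i, A (τ 0) (τ i) ↔ i = 1 ∨ i = 2 ∨ i = 3) ∧
      (∀ i, A (τ 1) (τ i) ↔ i = 0 ∨ i = 4 ∨ i = 5) := by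
  have hne : Nonempty V := Fintype.card_pos_iff.1 (by omega)
  obtain ⟨v0⟩ := hne
  obtain ⟨v1, v2, v3, h12, h13, h23, hN0⟩ := Finset.card_eq_three.1 (h3 v0)
  have n0 : ∀ u, A v0 u ↔ u = v1 ∨ u = v2 ∨ u = v3 := by
    intro u
    have := congrArg (fun s => u ∈ s) hN0
    simpa using this
  have a01 : A v0 v1 := (n0 _).2 (by simp)
  have a02 : A v0 v2 := (n0 _).2 (by simp)
  have a03 : A v0 v3 := (n0 _).2 (by simp)
  have m0 : v0 ∈ univ.filter fun u => A v1 u := by simp [hs _ _ a01]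
  have hc : ((univ.filter fun u => A v1 u).erase v0).card = 2 := by
    rw [Finset.card_erase_of_mem m0, h3]
  obtain ⟨v4, v5, h45, hN1⟩ := Finset.card_eq_two.1 hc
  have n1' : ∀ u, u ≠ v0 ∧ A v1 u ↔ u = v4 ∨ u = v5 := by
    intro u
    have := congrArg (fun s => u ∈ s) hN1
    simpa using this
  have a14 := (n1' v4).2 (Or.inl rfl)
  have a15 := (n1' v5).2 (Or.inr rfl)
  have n1 : ∀ u, A v1 u ↔ u = v0 ∨ u = v4 ∨ u = v5 := by
    intro u
    by_cases h : u = v0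
    · simp [h, hs _ _ a01]
    · have := n1' u
      tauto
  have e01 : v0 ≠ v1 := fun h => hi v0 (by simpa [← h] using a01)
  have e02 : v0 ≠ v2 := fun h => hi v0 (by simpa [← h] using a02)
  have e03 : v0 ≠ v3 := fun h => hi v0 (by simpa [← h] using a03)
  have e14 : v1 ≠ v4 := fun h => hi v1 (by simpa [← h] using a14.2)
  have e15 : v1 ≠ v5 := fun h => hi v1 (by simpa [← h] using a15.2)
  have e24 : v2 ≠ v4 := fun h => ht _ _ _ a01 a14.2 (h ▸ a02)
  have e25 : v2 ≠ v5 := fun h => ht _ _ _ a01 a15.2 (h ▸ a02)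
  have e34 : v3 ≠ v4 := fun h => ht _ _ _ a01 a14.2 (h ▸ a03)
  have e35 : v3 ≠ v5 := fun h => ht _ _ _ a01 a15.2 (h ▸ a03)
  have c6 : ({v0, v1, v2, v3, v4, v5} : Finset V).card = 6 := by
    rw [Finset.card_insert_of_notMem, Finset.card_insert_of_notMem, Finset.card_insert_of_notMem,
      Finset.card_insert_of_notMem, Finset.card_insert_of_notMem, Finset.card_singleton] <;>
      simp [*, a14.1.symm, a15.1.symm]
  have c2 : (univ \ ({v0, v1, v2, v3, v4, v5} : Finset V)).card = 2 := by
    rw [← Finset.compl_eq_univ_sdiff, Finset.card_compl, c6, hV]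
  obtain ⟨v6, v7, h67, hR⟩ := Finset.card_eq_two.1 c2
  have h6 : v6 ∈ univ \ ({v0, v1, v2, v3, v4, v5} : Finset V) := by rw [hR]; simp
  have h7 : v7 ∈ univ \ ({v0, v1, v2, v3, v4, v5} : Finset V) := by rw [hR]; simp
  simp only [mem_sdiff, mem_univ, true_and, mem_insert, mem_singleton, not_or] at h6 h7
  obtain ⟨p0, p1, p2, p3, p4, p5⟩ := h6
  obtain ⟨r0, r1, r2, r3, r4, r5⟩ := h7
  have e04 := a14.1.symm
  have e05 := a15.1.symm
  let t : Fin 8 → V := ![v0, v1, v2, v3, v4, v5, v6, v7]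
  have tinj : Function.Injective t := by
    have : ∀ i j : Fin 8, i < j → t i ≠ t j := by
      intro i j
      fin_cases i <;> fin_cases j <;> first
        | (intro h; exact absurd h (by decide))
        | (intro _; first | assumption | (apply Ne.symm; assumption))
    intro i j hij
    rcases lt_trichotomy i j with h | h | h
    · exact absurd hij (this _ _ h)
    · exact h
    · exact absurd hij.symm (this _ _ h)
  have tb : Function.Bijective t :=
    (Fintype.bijective_iff_injective_and_card t).2 ⟨tinj, by simp [hV]⟩
  refine ⟨Equiv.ofBijective t tb, ?_, ?_⟩
  · intro i
    change A v0 (t i) ↔ _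
    rw [n0]
    constructor
    · rintro (h | h | h)
      · left; exact tinj h
      · right; left; exact tinj h
      · right; right; exact tinj h
    · rintro (rfl | rfl | rfl)
      · exact Or.inl rfl
      · exact Or.inr (Or.inl rfl)
      · exact Or.inr (Or.inr rfl)
  · intro i
    change A v1 (t i) ↔ _
    rw [n1]
    constructor
    · rintro (h | h | h)
      · left; exact tinj h
      · right; left; exact tinj h
      · right; right; exact tinj h
    · rintro (rfl | rfl | rfl)
      · exact Or.inl rfl
      · exact Or.inr (Or.inl rfl)
      · exact Or.inr (Or.inr rfl)

theorem classify {V : Type} [Fintype V] (hV : Fintype.card V = 8) (A : V → V → Prop)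
    (hs : ∀ u v, A u v → A v u) (hi : ∀ u, ¬ A u u)
    (h3 : ∀ v, (univ.filter fun u => A v u).card = 3)
    (ht : ∀ a b c, A a b → A b c → A a c → False) :
    (∃ σ : Fin 8 ≃ V, ∀ e ∈ edW, A (σ e.1) (σ e.2)) ∨
    (∃ σ : Fin 8 ≃ V, ∀ e ∈ edC, A (σ e.1) (σ e.2)) := by
  obtain ⟨τ, n0, n1⟩ := label hV A hs hi h3 ht
  let b : Fin 8 → Fin 8 → Bool := fun i j => decide (A (τ i) (τ j))
  have bs : ∀ i j, b i j = b j i := by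
    intro i j
    simp only [b]
    exact decide_eq_decide.2 ⟨hs _ _, hs _ _⟩
  have bi : ∀ i, b i i = false := fun i => decide_eq_false (hi _)
  have b0 : ∀ i, b 0 i = decide (i = 1 ∨ i = 2 ∨ i = 3) := fun i => decide_eq_decide.2 (n0 i)
  have b1 : ∀ i, b 1 i = decide (i = 0 ∨ i = 4 ∨ i = 5) := fun i => decide_eq_decide.2 (n1 i)
  have bt : ∀ i j k, (b i j && b j k && b i k) = false := by
    intro i j k
    by_contra h
    simp only [Bool.not_eq_false, Bool.and_eq_true, b, decide_eq_true_eq] at h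
    exact ht _ _ _ h.1.1 h.1.2 h.2
  have bd : ∀ i, (b i 0).toNat + (b i 1).toNat + (b i 2).toNat + (b i 3).toNat + (b i 4).toNat +
      (b i 5).toNat + (b i 6).toNat + (b i 7).toNat = 3 := by
    intro i
    rw [← h3 (τ i), Finset.card_filter, ← Equiv.sum_comp τ, Fin.sum_univ_eight]
    simp only [b]
    have : ∀ P : Prop, (decide P).toNat = if P then 1 else 0 := by
      intro P; by_cases h : P <;> simp [h]
    simp only [this]
  have c20 : b 2 0 = true := by rw [bs, b0]; decide
  have c30 : b 3 0 = true := by rw [bs, b0]; decide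
  have c40 : b 4 0 = false := by rw [bs, b0]; decide
  have c50 : b 5 0 = false := by rw [bs, b0]; decide
  have c60 : b 6 0 = false := by rw [bs, b0]; decide
  have c70 : b 7 0 = false := by rw [bs, b0]; decide
  have c21 : b 2 1 = false := by rw [bs, b1]; decide
  have c31 : b 3 1 = false := by rw [bs, b1]; decide
  have c41 : b 4 1 = true := by rw [bs, b1]; decide
  have c51 : b 5 1 = true := by rw [bs, b1]; decide
  have c61 : b 6 1 = false := by rw [bs, b1]; decide
  have c71 : b 7 1 = false := by rw [bs, b1]; decide
  have c23 : b 2 3 = false := by simpa [c20, bs 0 3, c30] using bt 2 0 3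
  have c45 : b 4 5 = false := by simpa [c41, bs 1 5, c51] using bt 4 1 5
  have c32 := bs 3 2
  have c54 := bs 5 4
  rw [c23] at c32
  rw [c45] at c54
  have d2 := bd 2
  have d3 := bd 3
  have d4 := bd 4
  have d5 := bd 5
  have d6 := bd 6
  have d7 := bd 7
  simp only [c20, c30, c40, c50, c60, c70, c21, c31, c41, c51, c61, c71, c23, c45, c32, c54, bi,
    Bool.toNat_true, Bool.toNat_false, bs 4 2, bs 5 2, bs 6 2, bs 7 2, bs 4 3, bs 5 3, bs 6 3,
    bs 7 3, bs 6 4, bs 7 4, bs 6 5, bs 7 5, bs 7 6] at d2 d3 d4 d5 d6 d7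
  have key := cls_bool (b 2 4) (b 2 5) (b 2 6) (b 2 7) (by rw [beq_iff_eq]; omega)
    (b 3 4) (b 3 5) (b 3 6) (b 3 7) (by rw [beq_iff_eq]; omega)
    (b 4 6) (b 4 7) (by rw [beq_iff_eq]; omega) (by simp only [bt]; rfl)
    (b 5 6) (b 5 7) (by rw [beq_iff_eq]; omega) (by simp only [bt]; rfl)
    (b 6 7) (by rw [beq_iff_eq]; omega) (by rw [beq_iff_eq]; omega) (by simp only [bt]; rfl)
  have hM : ∀ i j, clsMat (b 2 4) (b 2 5) (b 2 6) (b 2 7) (b 3 4) (b 3 5) (b 3 6) (b 3 7)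
      (b 4 6) (b 4 7) (b 5 6) (b 5 7) (b 6 7) i j = b i j := by
    intro i j
    fin_cases i
    · change _ = b 0 _
      rw [b0]
      have : ∀ j : Fin 8, ![false, true, true, true, false, false, false, false] j =
        decide (j = 1 ∨ j = 2 ∨ j = 3) := by decide
      exact this j
    · change _ = b 1 _
      rw [b1]
      have : ∀ j : Fin 8, ![true, false, false, false, true, true, false, false] j =
        decide (j = 0 ∨ j = 4 ∨ j = 5) := by decide
      exact this j
    · fin_cases j <;> first | rfl | exact c20.symm | exact c21.symm | exact (bi _).symm | exact c23.symm
    · fin_cases j <;> first | rfl | exact c30.symm | exact c31.symm | exact c32.symm | exact (bi _).symm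
    · fin_cases j <;> first | rfl | exact c40.symm | exact c41.symm | exact c45.symm | exact (bi _).symm | exact bs _ _
    · fin_cases j <;> first | rfl | exact c50.symm | exact c51.symm | exact c54.symm | exact (bi _).symm | exact bs _ _
    · fin_cases j <;> first | rfl | exact c60.symm | exact c61.symm | exact (bi _).symm | exact bs _ _
    · fin_cases j <;> first | rfl | exact c70.symm | exact c71.symm | exact (bi _).symm | exact bs _ _
  rw [Bool.or_eq_true] at key
  have fin : ∀ s : Fin 8 → Fin 8, Function.Injective s → ∀ E : List (Fin 8 × Fin 8),
      (∀ e ∈ E, b (s e.1) (s e.2) = true) → ∃ σ : Fin 8 ≃ V, ∀ e ∈ E, A (σ e.1) (σ e.2) := by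
    intro s hsj E hE
    refine ⟨(Equiv.ofBijective s (Finite.injective_iff_bijective.1 hsj)).trans τ, ?_⟩
    intro e he
    have := hE e he
    simpa [b] using this
  rcases key with k | k
  · left
    obtain ⟨s, hsL, h⟩ := okP_spec k
    exact fin s (permW_inj s hsL) edW fun e he => by rw [← hM]; exact h e he
  · right
    obtain ⟨s, hsL, h⟩ := okP_spec k
    exact fin s (permC_inj s hsL) edC fun e he => by rw [← hM]; exact h e he

theorem wagner_mem : ∀ e : Fin 8 ⊕ Fin 4, ((wagner.src e : Fin 8), (wagner.tgt e : Fin 8)) ∈ edW := by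
  have h1 : ∀ i : Fin 8, (i, i + 1) ∈ edW := by decide
  have h2 : ∀ j : Fin 4, ((⟨j.val, by omega⟩ : Fin 8), (⟨j.val + 4, by omega⟩ : Fin 8)) ∈ edW := by decide
  rintro (i | j)
  · exact h1 i
  · exact h2 j

theorem cube_mem : ∀ e : Fin 12, ((cubeG.src e : Fin 8), (cubeG.tgt e : Fin 8)) ∈ edC := by
  have : ∀ e : Fin 12, ((![0, 0, 0, 1, 1, 2, 2, 3, 4, 4, 5, 6] e : Fin 8),
    (![1, 2, 4, 3, 5, 3, 6, 7, 5, 6, 7, 7] e : Fin 8)) ∈ edC := by decide +kernel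
  exact this

theorem cube_simple : cubeG.IsSimple := by
  have : (∀ e : Fin 12, (![0, 0, 0, 1, 1, 2, 2, 3, 4, 4, 5, 6] e : Fin 8) ≠
    (![1, 2, 4, 3, 5, 3, 6, 7, 5, 6, 7, 7] e : Fin 8)) ∧ ∀ e f : Fin 12,
     (((![0, 0, 0, 1, 1, 2, 2, 3, 4, 4, 5, 6] e : Fin 8) = (![0, 0, 0, 1, 1, 2, 2, 3, 4, 4, 5, 6] f : Fin 8) ∧
       (![1, 2, 4, 3, 5, 3, 6, 7, 5, 6, 7, 7] e : Fin 8) = (![1, 2, 4, 3, 5, 3, 6, 7, 5, 6, 7, 7] f : Fin 8)) ∨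
      ((![0, 0, 0, 1, 1, 2, 2, 3, 4, 4, 5, 6] e : Fin 8) = (![1, 2, 4, 3, 5, 3, 6, 7, 5, 6, 7, 7] f : Fin 8) ∧
       (![1, 2, 4, 3, 5, 3, 6, 7, 5, 6, 7, 7] e : Fin 8) = (![0, 0, 0, 1, 1, 2, 2, 3, 4, 4, 5, 6] f : Fin 8)))
      → e = f := by decide +kernel
  exact this

theorem wagner_simple : wagner.IsSimple := by
  let s : Fin 8 ⊕ Fin 4 → Fin 8 := Sum.elim id fun j => ⟨j.val, by omega⟩
  let t : Fin 8 ⊕ Fin 4 → Fin 8 := Sum.elim (fun i => i + 1) fun j => ⟨j.val + 4, by omega⟩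
  have hs : ∀ e, wagner.src e = s e := by rintro (i | j) <;> rfl
  have htt : ∀ e, wagner.tgt e = t e := by rintro (i | j) <;> rfl
  have : (∀ e, s e ≠ t e) ∧ ∀ e f, ((s e = s f ∧ t e = t f) ∨ (s e = t f ∧ t e = s f)) → e = f := by
    decide +kernel
  unfold Multigraph.IsSimple
  simp only [hs, htt]
  exact this

theorem wagner_nE : wagner.nE = 12 := by
  change Fintype.card (Fin 8 ⊕ Fin 4) = 12
  simp
theorem wagner_nV : wagner.nV = 8 := by
  change Fintype.card (Fin 8) = 8
  simp
theorem cube_nE : cubeG.nE = 12 := by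
  change Fintype.card (Fin 12) = 12
  simp

theorem wagner_or_cube {D : Multigraph} (hV : D.nV = 8) (hE : D.nE = 12)
    (hi : ∀ u, ¬ D.Adj u u) (h3 : ∀ v, (univ.filter fun u => D.Adj v u).card = 3)
    (ht : ∀ a b c, D.Adj a b → D.Adj b c → D.Adj a c → False) :
    IsIso wagner D ∨ IsIso cubeG D := by
  have hs : ∀ u v, D.Adj u v → D.Adj v u := by
    rintro u v ⟨e, h⟩
    exact ⟨e, h.symm⟩
  rcases classify hV D.Adj hs hi h3 ht with ⟨σ, h⟩ | ⟨σ, h⟩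
  · left
    exact iso_of_adj wagner_simple σ (fun e => h _ (wagner_mem e)) (by rw [wagner_nE, hE])
  · right
    exact iso_of_adj cube_simple σ (fun e => h _ (cube_mem e)) (by rw [cube_nE, hE])

def bl : List Bool := [false, true]

/-- the nonconstant two-colourings of eight vertices, the last one coloured `false` -/
def allP : List (Fin 8 → Bool) :=
  (bl.flatMap fun a => bl.flatMap fun b => bl.flatMap fun c => bl.flatMap fun d =>
    bl.flatMap fun e => bl.flatMap fun f => bl.map fun g => ![a, b, c, d, e, f, g, false]).filter
      fun P => P 0 || P 1 || P 2 || P 3 || P 4 || P 5 || P 6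

theorem mem_allP (P : Fin 8 → Bool) (h7 : P 7 = false) (u : Fin 8) (hu : P u = true) : P ∈ allP := by
  have hP : P = ![P 0, P 1, P 2, P 3, P 4, P 5, P 6, false] := by
    funext i
    fin_cases i <;> first | rfl | exact h7
  have hb : ∀ b : Bool, b ∈ bl := by decide
  rw [allP, List.mem_filter]
  refine ⟨?_, ?_⟩
  · rw [hP]
    simp only [List.mem_flatMap, List.mem_map]
    exact ⟨P 0, hb _, P 1, hb _, P 2, hb _, P 3, hb _, P 4, hb _, P 5, hb _, P 6, hb _, rfl⟩
  · by_contra h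
    simp only [Bool.or_eq_true, not_or, Bool.not_eq_true] at h
    obtain ⟨⟨⟨⟨⟨⟨a, b⟩, c⟩, d⟩, e⟩, f⟩, g⟩ := h
    have : P u = false := by
      fin_cases u <;> assumption
    simp [hu] at this

theorem of_allP {P : Fin 8 → Bool} (h : P ∈ allP) : P 7 = false ∧ ∃ u, P u = true := by
  rw [allP, List.mem_filter] at h
  obtain ⟨h1, h2⟩ := h
  simp only [List.mem_flatMap, List.mem_map] at h1
  constructor
  · obtain ⟨_, _, _, _, _, _, _, _, _, _, _, _, _, _, rfl⟩ := h1
    rfl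
  · simp only [Bool.or_eq_true] at h2
    rcases h2 with (((((a | a) | a) | a) | a) | a) | a <;> exact ⟨_, a⟩

def cutsOf {E : Type} (es : List E) (s t : E → Fin 8) : List (List E) :=
  allP.map fun P => es.filter fun e => P (s e) != P (t e)

def chkL {E : Type} [DecidableEq E] (L : List (List E)) (F : Finset E) : Bool :=
  L.all fun c => c.any fun e => !(decide (e ∈ F))

theorem nd_chk {E : Type} [Fintype E] [DecidableEq E] (es : List E) (hes : ∀ e, e ∈ es)
    (s t : E → Fin 8) (F : Finset E) :
    ND { V := Fin 8, E := E, src := s, tgt := t } F ↔ chkL (cutsOf es s t) F = true := by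
  have hc : chkL (cutsOf es s t) F = true ↔
      ∀ P ∈ allP, ∃ e, (P (s e) ≠ P (t e)) ∧ e ∉ F := by
    simp only [chkL, cutsOf, List.all_eq_true, List.any_eq_true, List.mem_map]
    constructor
    · intro h P hP
      obtain ⟨e, hm, h2⟩ := h _ ⟨P, hP, rfl⟩
      have h1 := (List.mem_filter.1 hm).2
      exact ⟨e, by simpa using h1, by simpa using h2⟩
    · rintro h _ ⟨P, hP, rfl⟩
      obtain ⟨e, h1, h2⟩ := h P hP
      exact ⟨e, List.mem_filter.2 ⟨hes e, by simpa using h1⟩, by simpa using h2⟩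
  rw [hc]
  constructor
  · intro h P hP
    by_contra hcon
    push Not at hcon
    obtain ⟨h7, u, hu⟩ := of_allP hP
    have := h (fun v => P v = true) (fun e he => by
      change P (s e) = true ↔ P (t e) = true
      have : P (s e) = P (t e) := by
        by_contra hne
        exact he (hcon e hne)
      rw [this]) u 7 hu
    simp [h7] at this
  · intro h P hP u v hu
    by_contra hv
    have hP' : ∀ e, e ∉ F → (P (s e) ↔ P (t e)) := hP
    by_cases h7 : P (7 : Fin 8)
    · obtain ⟨e, h1, h2⟩ := h (fun x => !(decide (P x)))
        (mem_allP _ (by simp [h7]) v (by simp [hv]))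
      apply h1
      simp [hP' e h2]
    · obtain ⟨e, h1, h2⟩ := h (fun x => decide (P x))
        (mem_allP _ (by simp [h7]) u (by simp [hu]))
      apply h1
      simp [hP' e h2]

def sW : Fin 8 ⊕ Fin 4 → Fin 8 := fun e => match e with
    | Sum.inl i => i
    | Sum.inr j => ⟨j.val, by omega⟩
def tW : Fin 8 ⊕ Fin 4 → Fin 8 := fun e => match e with
    | Sum.inl i => i + 1
    | Sum.inr j => ⟨j.val + 4, by omega⟩
def esW : List (Fin 8 ⊕ Fin 4) := [Sum.inl 0, Sum.inl 1, Sum.inl 2, Sum.inl 3, Sum.inl 4, Sum.inl 5,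
  Sum.inl 6, Sum.inl 7, Sum.inr 0, Sum.inr 1, Sum.inr 2, Sum.inr 3]

def esC : List (Fin 12) := [0, 1, 2, 3, 4, 5, 6, 7, 8, 9, 10, 11]

def codeW : Fin 8 ⊕ Fin 4 → ℕ := fun e => match e with
    | Sum.inl i => i.val
    | Sum.inr j => j.val + 8

theorem codeW_inj : Function.Injective codeW := by
  rintro (i | i) (j | j) h
  · exact congrArg _ (Fin.ext h)
  · exact absurd h (by simp only [codeW]; omega)
  · exact absurd h (by simp only [codeW]; omega)
  · exact congrArg _ (Fin.ext (by simp only [codeW] at h; omega))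

def maskL {E : Type} (k : E → ℕ) (l : List E) : ℕ := l.foldr (fun e n => 2 ^ k e ||| n) 0

instance lcomm {E : Type} (k : E → ℕ) : LeftCommutative fun (e : E) (n : ℕ) => 2 ^ k e ||| n :=
  ⟨fun a b c => by rw [← Nat.or_assoc, ← Nat.or_assoc, Nat.or_comm (2 ^ k a)]⟩

def maskF {E : Type} (k : E → ℕ) (F : Finset E) : ℕ :=
  F.val.foldr (fun e n => 2 ^ k e ||| n) 0

theorem testBit_maskL {E : Type} (k : E → ℕ) (l : List E) (i : ℕ) :
    (maskL k l).testBit i = true ↔ ∃ e ∈ l, k e = i := by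
  induction l with
  | nil => simp [maskL]
  | cons a l ih =>
    have : maskL k (a :: l) = 2 ^ k a ||| maskL k l := rfl
    rw [this, Nat.testBit_or, Bool.or_eq_true, ih, Nat.testBit_two_pow]
    simp

theorem maskF_eq {E : Type} (k : E → ℕ) (F : Finset E) : maskF k F = maskL k F.toList := by
  have : F.val = (F.toList : Multiset E) := (Finset.coe_toList F).symm
  unfold maskF
  rw [this]
  rfl

theorem land_mask {E : Type} {k : E → ℕ} (hk : Function.Injective k) (l : List E) (F : Finset E) :
    maskL k l &&& maskF k F = maskL k l ↔ ∀ e ∈ l, e ∈ F := by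
  rw [maskF_eq]
  constructor
  · intro h e he
    have h1 : (maskL k l).testBit (k e) = true := (testBit_maskL k l _).2 ⟨e, he, rfl⟩
    rw [← h, Nat.testBit_and, Bool.and_eq_true] at h1
    obtain ⟨e', h2, h3⟩ := (testBit_maskL k _ _).1 h1.2
    rw [← hk h3]
    exact Finset.mem_toList.1 h2
  · intro h
    apply Nat.eq_of_testBit_eq
    intro i
    rw [Nat.testBit_and]
    by_cases hb : (maskL k l).testBit i = true
    · obtain ⟨e, he, rfl⟩ := (testBit_maskL k l _).1 hb
      rw [hb, (testBit_maskL k _ _).2 ⟨e, Finset.mem_toList.2 (h e he), rfl⟩]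
      rfl
    · simp [Bool.not_eq_true] at hb
      simp [hb]

def chkM (L : List ℕ) (m : ℕ) : Bool := L.all fun c => !(Nat.beq (Nat.land c m) c)

theorem chkM_iff {E : Type} [DecidableEq E] {k : E → ℕ} (hk : Function.Injective k)
    {L : List (List E)} {M : List ℕ} (hM : L.map (maskL k) = M) (F : Finset E) :
    chkL L F = true ↔ chkM M (maskF k F) = true := by
  subst hM
  simp only [chkM, chkL, List.all_eq_true, List.mem_map, forall_exists_index, and_imp,
    forall_apply_eq_imp_iff₂, Bool.not_eq_true', List.any_eq_true]
  refine forall_congr' fun c => forall_congr' fun _ => ?_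
  have h1 := land_mask hk c F
  rw [← Bool.not_eq_true, Nat.beq_eq, show Nat.land (maskL k c) (maskF k F) =
    maskL k c &&& maskF k F from rfl, h1]
  simp

def masksW : List ℕ :=
  [1120, 560, 1616, 280, 1400, 808, 1864, 2060, 3180, 2620, 3676, 2324, 3444, 2852, 3908, 1030,
   102, 1590, 598, 1310, 382, 1838, 846, 3082, 2154, 3642, 2650, 3346, 2418, 3874, 2882, 515,
   1635, 51, 1107, 795, 1915, 299, 1355, 2575, 3695, 2111, 3167, 2839, 3959, 2343, 3399, 1541,
   613, 1077, 85, 1821, 893, 1325, 333, 3593, 2665, 3129, 2137, 3857, 2929, 3361, 2369, 385, 1505,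
   945, 2001, 153, 1273, 681, 1737, 2445, 3565, 3005, 4061, 2197, 3317, 2725, 3781, 1415, 487,
   1975, 983, 1183, 255, 1711, 719, 3467, 2539, 4027, 3035, 3219, 2291, 3747, 2755, 898, 2018,
   434, 1490, 666, 1786, 170, 1226, 2958, 4078, 2494, 3550, 2710, 3830, 2214, 3270, 1924, 996,
   1460, 468, 1692, 764, 1196, 204, 3976, 3048, 3512, 2520, 3728, 2800, 3232, 2240]

def masksC : List ℕ :=
  [2624, 1296, 3920, 772, 2372, 1556, 3156, 168, 2792, 1464, 4088, 940, 2540, 1724, 3324, 98,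
   2594, 1394, 3890, 870, 2342, 1654, 3126, 202, 2698, 1498, 3994, 974, 2446, 1758, 3230, 25,
   2649, 1289, 3913, 797, 2397, 1549, 3149, 177, 2801, 1441, 4065, 949, 2549, 1701, 3301, 123,
   2619, 1387, 3883, 895, 2367, 1647, 3119, 211, 2707, 1475, 3971, 983, 2455, 1735, 3207, 7, 2631,
   1303, 3927, 771, 2371, 1555, 3155, 175, 2799, 1471, 4095, 939, 2539, 1723, 3323, 101, 2597,
   1397, 3893, 865, 2337, 1649, 3121, 205, 2701, 1501, 3997, 969, 2441, 1753, 3225, 30, 2654,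
   1294, 3918, 794, 2394, 1546, 3146, 182, 2806, 1446, 4070, 946, 2546, 1698, 3298, 124, 2620,
   1388, 3884, 888, 2360, 1640, 3112, 212, 2708, 1476, 3972, 976, 2448, 1728, 3200]

set_option maxRecDepth 100000 in
theorem ndW (F : Finset (Fin 8 ⊕ Fin 4)) : ND wagner F ↔ chkM masksW (maskF codeW F) = true :=
  (nd_chk esW (by
    rintro (i | i) <;> fin_cases i <;> simp [esW]) sW tW F).trans
    (chkM_iff codeW_inj (by decide +kernel) F)

set_option maxRecDepth 100000 in
theorem ndC (F : Finset (Fin 12)) : ND cubeG F ↔ chkM masksC (maskF (fun e => e.val) F) = true :=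
  (nd_chk esC (by decide) cubeG.src cubeG.tgt F).trans
    (chkM_iff Fin.val_injective (by decide +kernel) F)

def cntW (i : ℕ) (f : Finset (Fin 8 ⊕ Fin 4) → Bool) : ℕ :=
  ((powersetCard i (univ : Finset (Fin 8 ⊕ Fin 4))).filter
    fun F => (f F && chkM masksW (maskF codeW F)) = true).card

def inE (e : Fin 8 ⊕ Fin 4) (F : Finset (Fin 8 ⊕ Fin 4)) : Bool := decide (e ∈ F)

set_option maxRecDepth 100000 in
theorem cntW0 : cntW 0 (fun _ => true) = 1 := by decide +kernel
set_option maxRecDepth 100000 in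
theorem cntW1 : cntW 1 (fun _ => true) = 12 := by decide +kernel
set_option maxRecDepth 100000 in
theorem cntW2 : cntW 2 (fun _ => true) = 66 := by decide +kernel
set_option maxRecDepth 100000 in
theorem cntW3 : cntW 3 (fun _ => true) = 212 := by decide +kernel
set_option maxRecDepth 100000 in
theorem cntW4 : cntW 4 (fun _ => true) = 409 := by decide +kernel
set_option maxRecDepth 100000 in
theorem cntW6 : cntW 6 (fun _ => true) = 0 := by decide +kernel
set_option maxRecDepth 100000 in
theorem cntW5ff : cntW 5 (fun F => !(inE (Sum.inl 0) F) && !(inE (Sum.inr 0) F)) = 114 := by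
  decide +kernel
set_option maxRecDepth 100000 in
theorem cntW5ft : cntW 5 (fun F => !(inE (Sum.inl 0) F) && (inE (Sum.inr 0) F)) = 117 := by
  decide +kernel
set_option maxRecDepth 100000 in
theorem cntW5tf : cntW 5 (fun F => (inE (Sum.inl 0) F) && !(inE (Sum.inr 0) F)) = 110 := by
  decide +kernel
set_option maxRecDepth 100000 in
theorem cntW5tt : cntW 5 (fun F => (inE (Sum.inl 0) F) && (inE (Sum.inr 0) F)) = 51 := by
  decide +kernel

set_option maxRecDepth 100000 in
theorem cntC4 : ((powersetCard 4 (univ : Finset (Fin 12))).filter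
    fun F => chkM masksC (maskF (fun e => e.val) F) = true).card = 408 := by decide +kernel

theorem cntW_spec (i : ℕ) (f : Finset (Fin 8 ⊕ Fin 4) → Bool) :
    ((univ : Finset (Finset wagner.E)).filter
      fun F => (F.card = i ∧ ND wagner F) ∧ f F = true).card = cntW i f := by
  unfold cntW
  refine Finset.card_bij (fun F _ => F) ?_ (fun _ _ _ _ h => h) ?_
  · intro F hF
    obtain ⟨⟨h1, h2⟩, h3⟩ := (Finset.mem_filter.1 hF).2
    refine Finset.mem_filter.2 ⟨Finset.mem_powersetCard.2 ⟨Finset.subset_univ _, h1⟩, ?_⟩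
    rw [(ndW F).1 h2, h3]; rfl
  · intro F hF
    obtain ⟨h1, h2⟩ := Finset.mem_filter.1 hF
    rw [Bool.and_eq_true] at h2
    exact ⟨F, Finset.mem_filter.2 ⟨Finset.mem_univ _,
      ⟨(Finset.mem_powersetCard.1 h1).2, (ndW F).2 h2.2⟩, h2.1⟩, rfl⟩

theorem cNW (i : ℕ) : cN wagner i = cntW i fun _ => true := by
  rw [← cntW_spec, cN]
  congr 1
  ext F
  simp

theorem cNC4 : cN cubeG 4 = 408 := by
  rw [← cntC4]
  refine Finset.card_bij (fun F _ => F) ?_ (fun _ _ _ _ h => h) ?_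
  · intro F hF
    obtain ⟨h1, h2⟩ := (Finset.mem_filter.1 hF).2
    exact Finset.mem_filter.2 ⟨Finset.mem_powersetCard.2 ⟨Finset.subset_univ _, h1⟩, (ndC F).1 h2⟩
  · intro F hF
    obtain ⟨h1, h2⟩ := Finset.mem_filter.1 hF
    exact ⟨F, Finset.mem_filter.2 ⟨Finset.mem_univ _,
      (Finset.mem_powersetCard.1 h1).2, (ndC F).2 h2⟩, rfl⟩

theorem cNW_big (j : ℕ) (hj : 5 < j) : cN wagner j = 0 := by
  have h6 : cN wagner 6 = 0 := by rw [cNW, cntW6]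
  unfold cN at h6 ⊢
  rw [Finset.card_eq_zero] at h6 ⊢
  rw [Finset.filter_eq_empty_iff] at h6 ⊢
  rintro F - ⟨h1, h2⟩
  obtain ⟨F', h3, h4⟩ := Finset.exists_subset_card_eq (show 6 ≤ F.card by omega)
  exact h6 (Finset.mem_univ F') ⟨h4, ND.mono h2 h3⟩

theorem prod_pow {E : Type} (w : E → ℕ) (q : ℕ) (F : Finset E) (h : ∀ e ∈ F, w e = q) :
    ∏ e ∈ F, w e = q ^ F.card := by
  rw [Finset.prod_congr rfl h, Finset.prod_const]

theorem prod_n {E : Type} (w : E → ℕ) (q : ℕ) (a0 b0 : E)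
    (hr : ∀ e, e ≠ a0 → e ≠ b0 → w e = q) (F : Finset E) (hF : F.card = 5)
    (h2 : a0 ∉ F) (h3 : b0 ∉ F) : ∏ e ∈ F, w e = q ^ 5 := by
  have := prod_pow w q F fun e he => hr e (fun h => h2 (h ▸ he)) (fun h => h3 (h ▸ he))
  rw [this, hF]

theorem prod_b {E : Type} (w : E → ℕ) (q b : ℕ) (a0 b0 : E) (hb : w b0 = b)
    (hr : ∀ e, e ≠ a0 → e ≠ b0 → w e = q) (F : Finset E) (hF : F.card = 5)
    (h2 : a0 ∉ F) (h3 : b0 ∈ F) : ∏ e ∈ F, w e = b * q ^ 4 := by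
  have h5 : (F.erase b0).card = 4 := by rw [Finset.card_erase_of_mem h3, hF]
  have := prod_pow w q (F.erase b0) fun e he =>
    hr e (fun h => h2 (h ▸ (Finset.mem_erase.1 he).2)) (Finset.mem_erase.1 he).1
  rw [← Finset.mul_prod_erase F w h3, hb, this, h5]

theorem prod_ab {E : Type} (w : E → ℕ) (q a b : ℕ) (a0 b0 : E) (hab : b0 ≠ a0)
    (ha : w a0 = a) (hb : w b0 = b)
    (hr : ∀ e, e ≠ a0 → e ≠ b0 → w e = q) (F : Finset E) (hF : F.card = 5)
    (h2 : a0 ∈ F) (h3 : b0 ∈ F) : ∏ e ∈ F, w e = a * b * q ^ 3 := by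
  have h3' : b0 ∈ F.erase a0 := Finset.mem_erase.2 ⟨hab, h3⟩
  have h5 : ((F.erase a0).erase b0).card = 3 := by
    rw [Finset.card_erase_of_mem h3', Finset.card_erase_of_mem h2, hF]
  have := prod_pow w q ((F.erase a0).erase b0) fun e he =>
    hr e (Finset.mem_erase.1 (Finset.mem_erase.1 he).2).1 (Finset.mem_erase.1 he).1
  rw [← Finset.mul_prod_erase F w h2, ← Finset.mul_prod_erase _ w h3', ha, hb, this, h5,
    mul_assoc]

def rl0 : wagner.E := (Sum.inl 0 : Fin 8 ⊕ Fin 4)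
def rg0 : wagner.E := (Sum.inr 0 : Fin 8 ⊕ Fin 4)

theorem rg_ne_rl : rg0 ≠ rl0 := fun h => by
  have h' : (Sum.inr 0 : Fin 8 ⊕ Fin 4) = Sum.inl 0 := h
  cases h'

theorem inE_iff (e : Fin 8 ⊕ Fin 4) (F : Finset (Fin 8 ⊕ Fin 4)) : inE e F = true ↔ e ∈ F := by
  simp [inE]

theorem inE_rl (F : Finset wagner.E) : inE (Sum.inl 0) F = true ↔ rl0 ∈ F := by
  exact inE_iff _ F
theorem inE_rg (F : Finset wagner.E) : inE (Sum.inr 0) F = true ↔ rg0 ∈ F := by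
  exact inE_iff _ F

theorem cN5 (w : wagner.E → ℕ) (q a b : ℕ) (hw : ∀ e, 1 ≤ w e) (ha : w rl0 = a)
    (hb : w rg0 = b) (hr : ∀ e, e ≠ rl0 → e ≠ rg0 → w e = q) :
    cN (subdivide wagner w) 5 =
      114 * q ^ 5 + 117 * (b * q ^ 4) + 110 * (a * q ^ 4) + 51 * (a * b * q ^ 3) := by
  rw [cN_subdivide (D := wagner) (w := w) hw]
  set S := (univ : Finset (Finset wagner.E)).filter fun F => F.card = 5 ∧ ND wagner F with hS
  have key : ∀ (f : Finset (Fin 8 ⊕ Fin 4) → Bool) (T : Finset (Finset wagner.E)) (n c : ℕ),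
      (∀ F, F ∈ T ↔ F ∈ S ∧ f F = true) → cntW 5 f = n →
      (∀ F ∈ T, ∏ e ∈ F, w e = c) → ∑ F ∈ T, ∏ e ∈ F, w e = n * c := by
    intro f T n c hT hn hc
    rw [Finset.sum_congr rfl hc, Finset.sum_const, smul_eq_mul, ← hn, ← cntW_spec]
    congr 2
    ext F
    rw [hT, hS, Finset.mem_filter, Finset.mem_filter, and_assoc]
  have hcard : ∀ F ∈ S, F.card = 5 := fun F hF => ((Finset.mem_filter.1 hF).2).1
  rw [← Finset.sum_filter_add_sum_filter_not S (fun F => rl0 ∈ F),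
    ← Finset.sum_filter_add_sum_filter_not (S.filter fun F => rl0 ∈ F) (fun F => rg0 ∈ F),
    ← Finset.sum_filter_add_sum_filter_not (S.filter fun F => ¬ rl0 ∈ F) (fun F => rg0 ∈ F)]
  rw [key _ ((S.filter fun F => rl0 ∈ F).filter fun F => rg0 ∈ F) 51 (a * b * q ^ 3) ?_ cntW5tt ?_,
    key _ ((S.filter fun F => rl0 ∈ F).filter fun F => ¬ rg0 ∈ F) 110 (a * q ^ 4) ?_ cntW5tf ?_,
    key _ ((S.filter fun F => ¬ rl0 ∈ F).filter fun F => rg0 ∈ F) 117 (b * q ^ 4) ?_ cntW5ft ?_,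
    key _ ((S.filter fun F => ¬ rl0 ∈ F).filter fun F => ¬ rg0 ∈ F) 114 (q ^ 5) ?_ cntW5ff ?_]
  · ring
  · intro F
    rw [Finset.mem_filter, Finset.mem_filter, Bool.and_eq_true, Bool.not_eq_true', Bool.not_eq_true',
      ← Bool.not_eq_true, ← Bool.not_eq_true, inE_rl, inE_rg, and_assoc]
  · intro F hF
    obtain ⟨hF, h3⟩ := Finset.mem_filter.1 hF
    obtain ⟨h1, h2⟩ := Finset.mem_filter.1 hF
    exact prod_n w q rl0 rg0 hr F (hcard F h1) h2 h3
  · intro F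
    rw [Finset.mem_filter, Finset.mem_filter, Bool.and_eq_true, Bool.not_eq_true',
      ← Bool.not_eq_true, inE_rl, inE_rg, and_assoc]
  · intro F hF
    obtain ⟨hF, h3⟩ := Finset.mem_filter.1 hF
    obtain ⟨h1, h2⟩ := Finset.mem_filter.1 hF
    exact prod_b w q b rl0 rg0 hb hr F (hcard F h1) h2 h3
  · intro F
    rw [Finset.mem_filter, Finset.mem_filter, Bool.and_eq_true, Bool.not_eq_true',
      ← Bool.not_eq_true, inE_rl, inE_rg, and_assoc]
  · intro F hF
    obtain ⟨hF, h3⟩ := Finset.mem_filter.1 hF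
    obtain ⟨h1, h2⟩ := Finset.mem_filter.1 hF
    exact prod_b w q a rg0 rl0 ha (fun e h h' => hr e h' h) F (hcard F h1) h3 h2
  · intro F
    rw [Finset.mem_filter, Finset.mem_filter, Bool.and_eq_true, inE_rl, inE_rg, and_assoc]
  · intro F hF
    obtain ⟨hF, h3⟩ := Finset.mem_filter.1 hF
    obtain ⟨h1, h2⟩ := Finset.mem_filter.1 hF
    exact prod_ab w q a b rl0 rg0 rg_ne_rl ha hb hr F (hcard F h1) h2 h3

theorem memG_sub (q : ℕ) (hq : 1 ≤ q) (w : wagner.E → ℕ) (hw : ∀ e, 1 ≤ w e)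
    (hs : ∑ e, w e = 12 * q) : memG (subdivide wagner w) (12 * q - 4) (12 * q) := by
  have hE : (subdivide wagner w).nE = 12 * q := (nE_subdivide (D := wagner) (w := w)).trans hs
  have hV := nV_subdivide (D := wagner) (w := w) hw
  rw [wagner_nE, wagner_nV, hs] at hV
  refine ⟨by omega, hE, ?_⟩
  rw [connected_iff_cN, cN_subdivide (D := wagner) (w := w) hw, ← cntW0, ← cNW, cN,
    Finset.card_eq_sum_ones]
  refine Finset.sum_congr rfl fun F hF => ?_
  have := ((Finset.mem_filter.1 hF).2).1
  rw [Finset.card_eq_zero.1 this]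
  exact Finset.prod_empty

theorem tree_sub (q : ℕ) (hq : 1 ≤ q) (w : wagner.E → ℕ) (hw : ∀ e, 1 ≤ w e)
    (hs : ∑ e, w e = 12 * q) : (subdivide wagner w).treeCount = cN (subdivide wagner w) 5 := by
  obtain ⟨h1, h2, _⟩ := memG_sub q hq w hw hs
  exact treeCount_eq (by omega) (by omega)

theorem sum_w (w : Fin 8 ⊕ Fin 4 → ℕ) (q : ℕ) (hq : 1 ≤ q) (wa : w (Sum.inl 0) = q - 1)
    (wb : w (Sum.inr 0) = q + 1)
    (wr : ∀ e, e ≠ Sum.inl 0 → e ≠ Sum.inr 0 → w e = q) : ∑ e, w e = 12 * q := by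
  rw [Fintype.sum_sum_type, Fin.sum_univ_eight, Fin.sum_univ_four, wa, wb]
  rw [wr _ (by decide) (by simp), wr _ (by decide) (by simp), wr _ (by decide) (by simp),
    wr _ (by decide) (by simp), wr _ (by decide) (by simp), wr _ (by decide) (by simp),
    wr _ (by decide) (by simp), wr _ (by simp) (by decide), wr _ (by simp) (by decide),
    wr _ (by simp) (by decide)]
  omega

theorem sum_q (q : ℕ) : ∑ _e : wagner.E, q = 12 * q := by
  have : ∑ _e : Fin 8 ⊕ Fin 4, q = 12 * q := by simp
  exact this

theorem w_facts (q : ℕ) (hq : 2 ≤ q) : ∃ w : wagner.E → ℕ, w = moveWeight (fun _ => q) rl0 rg0 ∧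
    w rl0 = q - 1 ∧ w rg0 = q + 1 ∧ (∀ e, e ≠ rl0 → e ≠ rg0 → w e = q) ∧ (∀ e, 1 ≤ w e) ∧
    ∑ e, w e = 12 * q := by
  have wa : moveWeight (fun _ => q) rl0 rg0 rl0 = q - 1 := by
    unfold moveWeight
    rw [if_neg rg_ne_rl.symm, if_pos rfl]
  have wb : moveWeight (fun _ => q) rl0 rg0 rg0 = q + 1 := by
    unfold moveWeight
    rw [if_pos rfl]
  have wr : ∀ e, e ≠ rl0 → e ≠ rg0 → moveWeight (fun _ => q) rl0 rg0 e = q := by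
    intro e h1 h2
    unfold moveWeight
    rw [if_neg h2, if_neg h1]
  refine ⟨_, rfl, wa, wb, wr, fun e => ?_, sum_w _ q (by omega) wa wb wr⟩
  by_cases h1 : e = rl0
  · rw [h1, wa]; omega
  by_cases h2 : e = rg0
  · rw [h2, wb]; omega
  · rw [wr e h1 h2]; omega

theorem lex_main (q : ℕ) (hq : 1 ≤ q) (H : Multigraph) (hH : memG H (12 * q - 4) (12 * q))
    (hn : ¬ IsIso (subdivide wagner fun _ => q) H) :
    ∃ i, (∀ j < i, cN H j ≤ cN (subdivide wagner fun _ => q) j) ∧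
      cN H i < cN (subdivide wagner fun _ => q) i := by
  have g : ∀ i, cN (subdivide wagner fun _ => q) i = q ^ i * cN wagner i :=
    fun i => cN_subdivide_const q hq i
  have g0 : cN (subdivide wagner fun _ => q) 0 = 1 := by rw [g, cNW, cntW0]; simp
  have g1 : cN (subdivide wagner fun _ => q) 1 = 12 * q := by rw [g, cNW, cntW1]; ring
  have g2 : cN (subdivide wagner fun _ => q) 2 = 66 * q ^ 2 := by rw [g, cNW, cntW2]; ring
  have g3 : cN (subdivide wagner fun _ => q) 3 = q ^ 3 * 212 := by rw [g, cNW, cntW3]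
  have g4 : cN (subdivide wagner fun _ => q) 4 = q ^ 4 * 409 := by rw [g, cNW, cntW4]
  have k0 : cN H 0 ≤ 1 := by simpa using cN_le H 0
  have k1 : cN H 1 ≤ 12 * q := by simpa [hH.2.1] using cN_le H 1
  by_cases c1 : cN H 1 < 12 * q
  · refine ⟨1, fun j hj => ?_, by rw [g1]; exact c1⟩
    interval_cases j; rw [g0]; exact k0
  obtain ⟨k2, st⟩ := structure_thm hq hH (not_lt.1 c1)
  by_cases c2 : cN H 2 < 66 * q ^ 2
  · refine ⟨2, fun j hj => ?_, by rw [g2]; exact c2⟩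
    interval_cases j
    · rw [g0]; exact k0
    · rw [g1]; exact k1
  obtain ⟨D, hiso, hV, hE, h3, h0, h66⟩ := st (not_lt.1 c2)
  have h2 := nd_two hE h66
  have hD : ∀ i, cN H i = q ^ i * cN D i := fun i => by
    rw [← cN_iso hiso, cN_subdivide_const q hq]
  obtain ⟨k3, st3⟩ := c3_bound hV h3 h2 hE
  by_cases c3 : cN D 3 < 212
  · refine ⟨3, fun j hj => ?_, ?_⟩
    · interval_cases j
      · rw [g0]; exact k0
      · rw [g1]; exact k1
      · rw [g2]; exact k2
    · rw [g3, hD]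
      exact Nat.mul_lt_mul_of_pos_left c3 (by positivity)
  have hst := st3 (not_lt.1 c3)
  rcases wagner_or_cube hV hE (fun u h => adj_ne hV h3 h2 h rfl) (nbr_card hV h3 h2)
    (fun a b c hab hbc hac => trianglefree hV h3 h2 h0 hst hab hbc hac) with hw | hc
  · exact absurd (isIso_trans (subdivide_iso q hq hw) hiso) hn
  · have h4 : cN D 4 = 408 := by rw [← cN_iso hc, cNC4]
    refine ⟨4, fun j hj => ?_, ?_⟩
    · interval_cases j
      · rw [g0]; exact k0
      · rw [g1]; exact k1
      · rw [g2]; exact k2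
      · rw [g3, hD]
        exact Nat.mul_le_mul_left _ k3
    · rw [g4, hD, h4]
      exact Nat.mul_lt_mul_of_pos_left (by norm_num) (by positivity)

theorem main_aux (q : ℕ) (hq : 1 ≤ q) :
    (∃ p₀ : ℝ, 0 < p₀ ∧ p₀ < 1 ∧ ∀ p : ℝ, p₀ < p → p < 1 →
      pOptimal (subdivide wagner fun _ => q) (12 * q - 4) (12 * q) p ∧
      ∀ H : Multigraph, pOptimal H (12 * q - 4) (12 * q) p →
        IsIso (subdivide wagner fun _ => q) H) ∧
    (8 ≤ q →
      (subdivide wagner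
          (moveWeight (fun _ => q) (Sum.inl (0 : Fin 8)) (Sum.inr (0 : Fin 4)))).treeCount
        = (subdivide wagner fun _ => q).treeCount + (7 * q - 51) * q ^ 3 ∧
      0 < (7 * q - 51) * q ^ 3 ∧
      (∃ p₁ : ℝ, 0 < p₁ ∧ p₁ < 1 ∧ ∀ p : ℝ, 0 < p → p < p₁ →
        (subdivide wagner fun _ => q).rel p <
          (subdivide wagner
            (moveWeight (fun _ => q) (Sum.inl (0 : Fin 8)) (Sum.inr (0 : Fin 4)))).rel p) ∧
      ¬ ∃ H : Multigraph, UniquelyOptimal H (12 * q - 4) (12 * q)) := by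
  have hGm : memG (subdivide wagner fun _ => q) (12 * q - 4) (12 * q) :=
    memG_sub q hq (fun _ => q) (fun _ => hq) (sum_q q)
  have hlex : ∃ p₀ : ℝ, 0 < p₀ ∧ p₀ < 1 ∧ ∀ p : ℝ, p₀ < p → p < 1 →
      ∀ H, memG H (12 * q - 4) (12 * q) → ¬ IsIso (subdivide wagner fun _ => q) H →
        H.rel p < (subdivide wagner fun _ => q).rel p := by
    obtain ⟨p₀, h0, h1, h⟩ := lex_one (12 * q)
    refine ⟨p₀, h0, h1, fun p hp hp1 H hH hn => ?_⟩
    obtain ⟨i, hi, hi'⟩ := lex_main q hq H hH hn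
    exact h p hp hp1 _ H hGm.2.1 hH.2.1 i hi hi'
  obtain ⟨p₀, h0, h1, hp₀⟩ := hlex
  refine ⟨⟨p₀, h0, h1, fun p hp hp1 => ⟨⟨hGm, fun H hH => ?_⟩, fun H hH => ?_⟩⟩, ?_⟩
  · by_cases hi : IsIso (subdivide wagner fun _ => q) H
    · exact (rel_iso hi p).ge
    · exact (hp₀ p hp hp1 H hH hi).le
  · by_contra hi
    exact absurd (hH.2 _ hGm) (not_le.2 (hp₀ p hp hp1 H hH.1 hi))
  intro h8
  obtain ⟨w', hw', wa, wb, wr, wpos, wsum⟩ := w_facts q (by omega)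
  change (subdivide wagner
          (moveWeight (fun _ => q) rl0 rg0)).treeCount
        = (subdivide wagner fun _ => q).treeCount + (7 * q - 51) * q ^ 3 ∧
      0 < (7 * q - 51) * q ^ 3 ∧
      (∃ p₁ : ℝ, 0 < p₁ ∧ p₁ < 1 ∧ ∀ p : ℝ, 0 < p → p < p₁ →
        (subdivide wagner fun _ => q).rel p <
          (subdivide wagner (moveWeight (fun _ => q) rl0 rg0)).rel p) ∧
      ¬ ∃ H : Multigraph, UniquelyOptimal H (12 * q - 4) (12 * q)
  rw [← hw']
  have hGm' := memG_sub q hq w' wpos wsum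
  have t1 := tree_sub q hq w' wpos wsum
  have t0 := tree_sub q hq (fun _ => q) (fun _ => hq) (sum_q q)
  have e1 := cN5 w' q (q - 1) (q + 1) wpos wa wb wr
  have e0 := cN5 (fun _ => q) q q q (fun _ => hq) rfl rfl (fun _ _ _ => rfl)
  have ht : cN (subdivide wagner w') 5 =
      cN (subdivide wagner fun _ => q) 5 + (7 * q - 51) * q ^ 3 := by
    refine e1.trans ((?_ : _ = _).trans (congrArg (· + (7 * q - 51) * q ^ 3) e0.symm))
    obtain ⟨r, rfl⟩ := Nat.exists_eq_add_of_le h8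
    rw [show 8 + r - 1 = r + 7 by omega, show 7 * (8 + r) - 51 = 7 * r + 5 by omega]
    ring
  have hpos : 0 < (7 * q - 51) * q ^ 3 := Nat.mul_pos (by omega) (by positivity)
  have hsmall : ∃ p₁ : ℝ, 0 < p₁ ∧ p₁ < 1 ∧ ∀ p : ℝ, 0 < p → p < p₁ →
      (subdivide wagner fun _ => q).rel p < (subdivide wagner w').rel p := by
    obtain ⟨p₁, a, b, c⟩ := lex_zero (12 * q) 5 (by omega)
    refine ⟨p₁, a, b, fun p hp hp1 => c p hp hp1 _ _ hGm'.2.1 hGm.2.1 (fun j hj => ?_) (by omega)⟩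
    have := cN_subdivide_const (D := wagner) q hq j
    rw [this, cNW_big j hj, mul_zero]
  refine ⟨?_, hpos, hsmall, ?_⟩
  · exact t1.trans (ht.trans (congrArg (· + (7 * q - 51) * q ^ 3) t0.symm))
  · rintro ⟨H, hHm, hH⟩
    obtain ⟨p₁, a, b, c⟩ := hsmall
    have hi : IsIso (subdivide wagner fun _ => q) H := by
      by_contra hi
      have h2 := hp₀ ((p₀ + 1) / 2) (by linarith) (by linarith) H hHm hi
      have h3 := hH _ hGm (fun h => hi (isIso_symm h)) ((p₀ + 1) / 2) (by linarith) (by linarith)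
      linarith
    have h4 := c (p₁ / 2) (by linarith) (by linarith)
    rw [rel_iso hi] at h4
    have h5 := hH _ hGm' (fun h => by rw [rel_iso h] at h4; exact lt_irrefl _ h4) (p₁ / 2)
      (by linarith) (by linarith)
    linarith

/-- in 𝒢_{12q−4,12q}: (a) for p near 1 the perfectly balanced Wagner
subdivision (all chains of length q) is the unique p-optimal graph; (b) for q ≥ 8,
moving one edge from a rail chain to an adjacent rung chain gains (7q−51)q³ > 0
spanning trees, so the resulting graph is strictly more reliable for p near 0, and
no uniquely optimal graph exists in 𝒢_{12q−4,12q}. -/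
theorem wagner_case_k4 (q : ℕ) (hq : 1 ≤ q) :
    (∃ p₀ : ℝ, 0 < p₀ ∧ p₀ < 1 ∧ ∀ p : ℝ, p₀ < p → p < 1 →
      pOptimal (subdivide wagner fun _ => q) (12 * q - 4) (12 * q) p ∧
      ∀ H : Multigraph, pOptimal H (12 * q - 4) (12 * q) p →
        IsIso (subdivide wagner fun _ => q) H) ∧
    (8 ≤ q →
      (subdivide wagner
          (moveWeight (fun _ => q) (Sum.inl (0 : Fin 8)) (Sum.inr (0 : Fin 4)))).treeCount
        = (subdivide wagner fun _ => q).treeCount + (7 * q - 51) * q ^ 3 ∧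
      0 < (7 * q - 51) * q ^ 3 ∧
      (∃ p₁ : ℝ, 0 < p₁ ∧ p₁ < 1 ∧ ∀ p : ℝ, 0 < p → p < p₁ →
        (subdivide wagner fun _ => q).rel p <
          (subdivide wagner
            (moveWeight (fun _ => q) (Sum.inl (0 : Fin 8)) (Sum.inr (0 : Fin 4)))).rel p) ∧
      ¬ ∃ H : Multigraph, UniquelyOptimal H (12 * q - 4) (12 * q)) := by
  exact main_aux q hq
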